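/- arXiv:2512.23287 — 5 statements merged into one kernel-verified Lean document; each statement's English description precedes it below -/
import Mathlib

section
/- Let n ∈ ℕ, n ≥ 2, let p ∈ (1,n), and let k ∈ ℕ satisfy 2 ≤ k < n/p + 1. Then there exists a constant C = C(n,k,p) > 0 such that for every (k−1)-times continuously differentiable function f : ℝ^n → ℝ satisfying |∇^j f|**(t) < ∞ for all t > 0 and lim_{t→∞} |∇^j f|**(t) = 0 for each j ∈ {0,…,k−1}, and for every t > 0: (∫_0^t (f**(s) − f*(s))^p ds)^{1/p} + t^{k/n}·(∫_t^∞ (f**(s) − f*(s))^p s^{−kp/n} ds)^{1/p} ≤ C·ω_k(f, t^{1/n})_p. -/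
open MeasureTheory Set Filter Topology
open scoped ENNReal

noncomputable section

/-- The non-increasing rearrangement of an `ℝ≥0∞`-valued function with respect to `μ`. -/
def rearr {α : Type*} [MeasurableSpace α] (μ : Measure α) (f : α → ℝ≥0∞) (t : ℝ) : ℝ≥0∞ :=
  sInf {l : ℝ≥0∞ | μ {x | l < f x} ≤ ENNReal.ofReal t}

/-- The non-increasing rearrangement `f*` of a real-valued function. -/
def rearrR {α : Type*} [MeasurableSpace α] (μ : Measure α) (f : α → ℝ) : ℝ → ℝ≥0∞ :=
  rearr μ fun x => ENNReal.ofReal |f x|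

/-- The maximal non-increasing rearrangement `f**(t) = (1/t) ∫_0^t f*(s) ds`. -/
def dstarR {α : Type*} [MeasurableSpace α] (μ : Measure α) (f : α → ℝ) (t : ℝ) : ℝ≥0∞ :=
  ENNReal.ofReal (1 / t) * ∫⁻ s in Ioc (0 : ℝ) t, rearrR μ f s

/-- The oscillation `f**(t) - f*(t)`. -/
def oscR {α : Type*} [MeasurableSpace α] (μ : Measure α) (f : α → ℝ) (t : ℝ) : ℝ≥0∞ :=
  dstarR μ f t - rearrR μ f t

/-- The quasinorm of the classical Lorentz space `S^p(w)`. -/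
def SNorm {α : Type*} [MeasurableSpace α] (μ : Measure α) (p : ℝ) (w : ℝ → ℝ≥0∞)
    (f : α → ℝ) : ℝ≥0∞ :=
  (∫⁻ t in Ioi (0 : ℝ), oscR μ f t ^ p * w t) ^ (1 / p)

/-- The quasinorm of the classical Lorentz space `Λ^p(w)`. -/
def LambdaNorm {α : Type*} [MeasurableSpace α] (μ : Measure α) (p : ℝ) (w : ℝ → ℝ≥0∞)
    (f : α → ℝ) : ℝ≥0∞ :=
  (∫⁻ t in Ioi (0 : ℝ), rearrR μ f t ^ p * w t) ^ (1 / p)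

/-- Rearrangement with respect to Lebesgue measure on `(0,∞)`,
for `ℝ≥0∞`-valued functions. -/
def rearrL (g : ℝ → ℝ≥0∞) : ℝ → ℝ≥0∞ :=
  rearr (volume.restrict (Ioi (0 : ℝ))) g

/-- The quasinorm of `Λ^p(w)` over `(0,∞)`, for `ℝ≥0∞`-valued functions. -/
def LambdaNormE (p : ℝ) (w : ℝ → ℝ≥0∞) (g : ℝ → ℝ≥0∞) : ℝ≥0∞ :=
  (∫⁻ t in Ioi (0 : ℝ), rearrL g t ^ p * w t) ^ (1 / p)

/-- The operator `T`, `(Tg)(t) = ∫_0^{1/t} g(s) ds − (1/t) g(1/t)`. -/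
def TopE (g : ℝ → ℝ≥0∞) (t : ℝ) : ℝ≥0∞ :=
  (∫⁻ s in Ioc (0 : ℝ) (1 / t), g s) - ENNReal.ofReal (1 / t) * g (1 / t)

/-- The weight `w̃(t) = t^{p-2} w(1/t)`. -/
def tildeW (p : ℝ) (w : ℝ → ℝ≥0∞) (t : ℝ) : ℝ≥0∞ :=
  ENNReal.ofReal t ^ (p - 2) * w (1 / t)

/-- The first-order difference operator `Δ_h f = f(·+h) - f(·)`. -/
def deltaOp {n : ℕ} (h : EuclideanSpace ℝ (Fin n)) (f : EuclideanSpace ℝ (Fin n) → ℝ) :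
    EuclideanSpace ℝ (Fin n) → ℝ :=
  fun x => f (x + h) - f x

/-- The `p`-modulus of smoothness of order `k`:
`ω_k(f,t)_p = sup_{|h| ≤ t} ‖Δ_h^k f‖_{L^p(ℝⁿ)}`. -/
def smoothnessModulus (n : ℕ) (k : ℕ) (p : ℝ) (f : EuclideanSpace ℝ (Fin n) → ℝ)
    (t : ℝ) : ℝ≥0∞ :=
  ⨆ (h : EuclideanSpace ℝ (Fin n)) (_ : ‖h‖ ≤ t),
    eLpNorm ((deltaOp h)^[k] f) (ENNReal.ofReal p) volume

/-!
The inequality is proved without Sobolev norms, directly from differences.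

**Oscillation.** If `|f(x)| > f*(s)`, then on at least half of a cube of measure `2s` the translate
`f(x+u)` is at most `f*(s)` in absolute value. Averaging over the cube bounds `f** - f*` at `s` by
`2 s⁻¹ sup_u sup_{|E| ≤ s} ∫_E |Δ_u f|`, where `u` runs through a cube of side
`(2s)^{1/n}` (`osc_le`). Suprema of integrals over sets of measure at most `s` (`setSup`) replace
`s f**(s)`, because they are subadditive and translation invariant by inspection.

**Decomposition.** Let `τ` be a small multiple of `t^{1/n}` and let `g(x)` be the average of
`Δ_y^k f(x)` over `y`, a sum of `k` points of the cube `[0,τ]^n` (`gAvg`). Expanding `Δ_y^k` shows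
that `± f` is `g` minus a combination of the iterated Steklov averages of `f` at the scales
`τ, 2τ, …, kτ`. By Minkowski `‖g‖_p ≤ ω_k(f, t^{1/n})_p`, and Hardy's inequality (`hardy_maxAvg`)
handles the contribution of `g`.

**Steklov averages.** A difference `Δ_u` of a Steklov average at scale `σ` is bounded by `|u|/σ`
times a difference of step `σ`, and this uses up one average in each coordinate direction
(`setSup_deltaOp_cube`). So the remaining contribution to the oscillation at `s` is
`s^{1/n}/τ` times maximal averages of `(k-1)`-fold Steklov averages of `Δ_{σ e_i} f`.
These are estimated in `L^p(s^{-(k-1)p/n} ds)` by `sobolev_chain`: comparing the scales `s` and `2s`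
gives `v**(s) ≤ v**(2s) + (first differences)`, and since `v**(∞) = 0` one may sum over dyadic
scales. The dyadic series converges geometrically because `(k-1)/n < 1/p`. After `k - 1` steps only
`L^p` norms of mixed `k`-th differences of `f` with steps `σ` are left.

**Mixed and pure differences.** Mixed differences are bounded by pure ones by applying the mixed
difference in the directions `(a_j, -a_j/j)` of `ℝⁿ × ℝⁿ` to `(x,y) ↦ Δ_y^k f(x)`: this annihilates
every term `f(x + l y)` with `1 ≤ l ≤ k` (`eLpNorm_mixD_le`).

Both terms of the asserted inequality are then dominated by the `L^p(0,∞)` norm of a single function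
(`exists_majorant`), since `s^{1/n} ≤ t^{k/n} s^{-(k-1)/n}` for `s ≤ t`.
-/

/-! ### Power-weighted `L^p` norms on the half-line -/

/-- The norm of `s ↦ s^{-b} F(s)` in `L^p(0,∞)`. -/
def wNorm (p b : ℝ) (F : ℝ → ℝ≥0∞) : ℝ≥0∞ :=
  (∫⁻ s in Ioi (0 : ℝ), (ENNReal.ofReal s ^ (-b) * F s) ^ p) ^ (1 / p)

lemma wNorm_mono {p b : ℝ} (hp : 1 < p) {F G : ℝ → ℝ≥0∞} (h : ∀ s > 0, F s ≤ G s) :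
    wNorm p b F ≤ wNorm p b G := by
  unfold wNorm
  have hp0 : 0 ≤ p := by linarith
  refine ENNReal.rpow_le_rpow (setLIntegral_mono' measurableSet_Ioi fun s hs => ?_) (by positivity)
  exact ENNReal.rpow_le_rpow (mul_le_mul_right (h s hs) _) hp0

lemma wNorm_add_le {p b : ℝ} (hp : 1 < p) {F G : ℝ → ℝ≥0∞} (hF : Measurable F)
    (hG : Measurable G) :
    wNorm p b (fun s => F s + G s) ≤ wNorm p b F + wNorm p b G := by
  have := ENNReal.lintegral_Lp_add_le (μ := volume.restrict (Ioi (0 : ℝ))) (p := p)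
    (f := fun s => ENNReal.ofReal s ^ (-b) * F s) (g := fun s => ENNReal.ofReal s ^ (-b) * G s)
    (by fun_prop) (by fun_prop) hp.le
  simpa [wNorm, mul_add] using this

lemma wNorm_const_mul {p b : ℝ} (hp : 1 < p) {F : ℝ → ℝ≥0∞} (hF : Measurable F) (c : ℝ≥0∞) :
    wNorm p b (fun s => c * F s) = c * wNorm p b F := by
  have hp0 : 0 ≤ p := by linarith
  unfold wNorm
  have : ∀ s, (ENNReal.ofReal s ^ (-b) * (c * F s)) ^ p
      = c ^ p * (ENNReal.ofReal s ^ (-b) * F s) ^ p := fun s => by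
    rw [← ENNReal.mul_rpow_of_nonneg _ _ hp0]; ring_nf
  simp_rw [this]
  rw [lintegral_const_mul _ (by fun_prop), ENNReal.mul_rpow_of_nonneg _ _ (by positivity),
    ← ENNReal.rpow_mul, mul_one_div_cancel (by linarith), ENNReal.rpow_one]

lemma wNorm_zero {p b : ℝ} (hp : 1 < p) : wNorm p b (fun _ => 0) = 0 := by
  have := wNorm_const_mul (b := b) hp (F := fun _ => 0) measurable_const 0
  simpa using this

lemma wNorm_sum_le {p b : ℝ} (hp : 1 < p) {ι : Type*} (S : Finset ι) {F : ι → ℝ → ℝ≥0∞}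
    (hF : ∀ i, Measurable (F i)) :
    wNorm p b (fun s => ∑ i ∈ S, F i s) ≤ ∑ i ∈ S, wNorm p b (F i) := by
  classical
  induction S using Finset.induction_on with
  | empty => simp [wNorm_zero hp]
  | insert a S ha ih =>
    simp_rw [Finset.sum_insert ha]
    exact (wNorm_add_le hp (hF a) (Finset.measurable_sum _ fun i _ => hF i)).trans (by gcongr)

lemma wNorm_tsum_le {p b : ℝ} (hp : 1 < p) {F : ℕ → ℝ → ℝ≥0∞} (hF : ∀ i, Measurable (F i)) :
    wNorm p b (fun s => ∑' i, F i s) ≤ ∑' i, wNorm p b (F i) := by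
  have hp0 : 0 < p := by linarith
  have key : ∀ N, ∫⁻ s in Ioi (0 : ℝ), (ENNReal.ofReal s ^ (-b) * ∑ i ∈ Finset.range N, F i s) ^ p
      ≤ (∑' i, wNorm p b (F i)) ^ p := by
    intro N
    have h := (wNorm_sum_le (b := b) hp (Finset.range N) hF).trans (ENNReal.sum_le_tsum _)
    unfold wNorm at h
    rw [one_div, ENNReal.rpow_inv_le_iff hp0] at h
    simpa [wNorm, one_div] using h
  have hmono : Monotone fun (N : ℕ) (s : ℝ) =>
      (ENNReal.ofReal s ^ (-b) * ∑ i ∈ Finset.range N, F i s) ^ p := by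
    intro M N h s
    dsimp only
    gcongr
  have hpt : ∀ s, (ENNReal.ofReal s ^ (-b) * ∑' i, F i s) ^ p
      = ⨆ N : ℕ, (ENNReal.ofReal s ^ (-b) * ∑ i ∈ Finset.range N, F i s) ^ p := by
    intro s
    rw [ENNReal.tsum_eq_iSup_nat, ENNReal.mul_iSup]
    exact (ENNReal.orderIsoRpow p hp0).map_iSup _
  rw [wNorm, one_div, ENNReal.rpow_inv_le_iff hp0]
  simp_rw [hpt]
  rw [lintegral_iSup (fun N => by
    have := Finset.measurable_sum (Finset.range N) fun i _ => hF i
    fun_prop) hmono]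
  exact iSup_le key

lemma wNorm_dil {p b : ℝ} (hp : 1 < p) {F : ℝ → ℝ≥0∞} (hF : Measurable F) {l : ℝ} (hl : 0 < l) :
    wNorm p b (fun s => F (l * s)) = ENNReal.ofReal (l ^ (b - 1 / p)) * wNorm p b F := by
  have hp0 : 0 < p := by linarith
  have hl1 : ENNReal.ofReal l ≠ 0 := by simpa using hl
  have hl2 : ENNReal.ofReal l ≠ ∞ := ENNReal.ofReal_ne_top
  set H : ℝ → ℝ≥0∞ := (Ioi (0 : ℝ)).indicator fun s => (ENNReal.ofReal s ^ (-b) * F s) ^ p with hH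
  have hHm : Measurable H := Measurable.indicator (by fun_prop) measurableSet_Ioi
  have e1 : ∫⁻ s, H (l * s) = ENNReal.ofReal l⁻¹ * ∫⁻ s, H s := by
    rw [← lintegral_map hHm (by fun_prop : Measurable fun s : ℝ => l * s),
      Real.map_volume_mul_left hl.ne', lintegral_smul_measure, abs_of_pos (by positivity)]
    rfl
  have e2 : ∀ s, (Ioi (0 : ℝ)).indicator (fun s => (ENNReal.ofReal s ^ (-b) * F (l * s)) ^ p) s
      = ENNReal.ofReal l ^ (b * p) * H (l * s) := by
    intro s
    by_cases hs : 0 < s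
    · have hls : 0 < l * s := by positivity
      rw [hH, indicator_of_mem (by exact hs), indicator_of_mem (by exact hls),
        ENNReal.ofReal_mul hl.le, ENNReal.mul_rpow_of_ne_top hl2 ENNReal.ofReal_ne_top, mul_assoc,
        ENNReal.mul_rpow_of_nonneg (ENNReal.ofReal l ^ (-b)) _ hp0.le, ← mul_assoc,
        ← ENNReal.rpow_mul, ← ENNReal.rpow_add _ _ hl1 hl2]
      simp
    · have hls : ¬ 0 < l * s := by
        exact fun h => hs (pos_of_mul_pos_right h hl.le)
      rw [hH, indicator_of_notMem (by exact hs), indicator_of_notMem (by exact hls), mul_zero]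
  unfold wNorm
  rw [← lintegral_indicator measurableSet_Ioi, ← lintegral_indicator measurableSet_Ioi]
  simp_rw [e2]
  rw [lintegral_const_mul _ (by fun_prop), e1, ← mul_assoc,
    ENNReal.mul_rpow_of_nonneg _ _ (by positivity)]
  congr 1
  rw [ENNReal.ofReal_inv_of_pos hl, ← ENNReal.rpow_neg_one, ← ENNReal.rpow_add _ _ hl1 hl2,
    ← ENNReal.rpow_mul, ENNReal.ofReal_rpow_of_pos hl]
  congr 2
  field_simp
  ring

/-- Discrete Hardy inequality: if `F(s) ≤ ∑_j a^j G(l^j s)`, the weighted norm of `F` is controlled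
by that of `G`. Dilating by `l` multiplies the norm by `l^{b-1/p}`, so the constant is the sum of a
geometric series. -/
lemma wNorm_geom {p b : ℝ} (hp : 1 < p) {a l : ℝ} (ha : 0 ≤ a) (hl : 0 < l)
    (hr : a * l ^ (b - 1 / p) < 1) :
    ∃ C : ℝ≥0∞, C ≠ ∞ ∧ ∀ F G : ℝ → ℝ≥0∞, Measurable G →
      (∀ s > 0, F s ≤ ∑' j : ℕ, ENNReal.ofReal a ^ j * G (l ^ j * s)) →
      wNorm p b F ≤ C * wNorm p b G := by
  set r := ENNReal.ofReal (a * l ^ (b - 1 / p)) with hrdef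
  have hr1 : r < 1 := by simpa [hrdef] using hr
  refine ⟨∑' j : ℕ, r ^ j, ?_, fun F G hG h => ?_⟩
  · rw [ENNReal.tsum_geometric]
    simpa using (tsub_pos_of_lt hr1).ne'
  · calc wNorm p b F ≤ wNorm p b (fun s => ∑' j : ℕ, ENNReal.ofReal a ^ j * G (l ^ j * s)) :=
          wNorm_mono hp h
      _ ≤ ∑' j : ℕ, wNorm p b (fun s => ENNReal.ofReal a ^ j * G (l ^ j * s)) :=
          wNorm_tsum_le hp fun j => by fun_prop
      _ = ∑' j : ℕ, r ^ j * wNorm p b G := by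
          congr 1; ext j
          rw [wNorm_const_mul hp (by fun_prop), wNorm_dil hp hG (by positivity), ← mul_assoc,
            hrdef, ENNReal.ofReal_mul ha, mul_pow]
          congr 2
          rw [← ENNReal.ofReal_pow (by positivity), ← Real.rpow_natCast, ← Real.rpow_natCast,
              ← Real.rpow_mul hl.le, ← Real.rpow_mul hl.le, mul_comm (j : ℝ)]
      _ = _ := ENNReal.tsum_mul_right

/-! ### The rearrangement -/

section Rearrangement

variable {α : Type*} [MeasurableSpace α] {μ : Measure α}

/-- The defining Galois relation of the rearrangement; it rests on the right-continuity of the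
distribution function. -/
lemma lt_rearr_iff (f : α → ℝ≥0∞) (t : ℝ) (y : ℝ≥0∞) :
    y < rearr μ f t ↔ ENNReal.ofReal t < μ {x | y < f x} := by
  constructor
  · intro h
    by_contra! h'
    exact absurd (sInf_le (show y ∈ {l : ℝ≥0∞ | μ {x | l < f x} ≤ ENNReal.ofReal t} from h'))
      (not_le.2 h)
  · intro h
    rcases eq_or_ne y ∞ with rfl | hy
    · simp at h
    obtain ⟨u, hu_anti, hu_gt, hu_lim⟩ := exists_seq_strictAnti_tendsto' (lt_top_iff_ne_top.2 hy)
    have hun : {x | y < f x} = ⋃ i, {x | u i < f x} := by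
      ext x
      simp only [mem_ofPred_eq, mem_iUnion]
      refine ⟨fun hx => ?_, fun ⟨i, hi⟩ => (hu_gt i).1.trans hi⟩
      exact (hu_lim.eventually (gt_mem_nhds hx)).exists
    have hmono : Monotone fun i => {x | u i < f x} := by
      intro i j hij x hx
      exact lt_of_le_of_lt (hu_anti.antitone hij) hx
    rw [hun, hmono.measure_iUnion, lt_iSup_iff] at h
    obtain ⟨i, hi⟩ := h
    refine lt_of_lt_of_le (hu_gt i).1 (le_sInf fun l hl => ?_)
    by_contra! hlu
    refine absurd (hi.trans_le ((measure_mono ?_).trans hl)) (lt_irrefl _)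
    intro x hx
    exact hlu.trans hx

lemma rearr_antitone (f : α → ℝ≥0∞) : Antitone (rearr μ f) := by
  intro s t hst
  exact sInf_le_sInf fun l hl => le_trans hl (ENNReal.ofReal_le_ofReal hst)

lemma measure_rearr_lt_le (f : α → ℝ≥0∞) (t : ℝ) :
    μ {x | rearr μ f t < f x} ≤ ENNReal.ofReal t := by
  by_contra! h
  exact lt_irrefl _ ((lt_rearr_iff f t _).2 h)

lemma volume_lt_ofReal (m : ℝ≥0∞) :
    volume.restrict (Ioi (0 : ℝ)) {s | ENNReal.ofReal s < m} = m := by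
  rw [Measure.restrict_apply (measurableSet_lt (by fun_prop) measurable_const)]
  rcases eq_or_ne m ∞ with rfl | hm
  · simp
  · have : {s | ENNReal.ofReal s < m} ∩ Ioi (0 : ℝ) = Ioo 0 m.toReal := by
      ext s
      simp only [mem_inter_iff, mem_ofPred_eq, mem_Ioi, mem_Ioo, and_comm (b := 0 < s)]
      refine and_congr_right fun hs => ?_
      rw [ENNReal.ofReal_lt_iff_lt_toReal hs.le hm]
    rw [this, Real.volume_Ioo, sub_zero, ENNReal.ofReal_toReal hm]

/-- Layer-cake formula for `ℝ≥0∞`-valued functions. -/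
lemma layer_cake {F : α → ℝ≥0∞} [SFinite μ] (hF : Measurable F) :
    ∫⁻ x, F x ∂μ = ∫⁻ y in Ioi (0 : ℝ), μ {x | ENNReal.ofReal y < F x} := by
  have hm : MeasurableSet {q : α × ℝ | ENNReal.ofReal q.2 < F q.1} :=
    measurableSet_lt (by fun_prop) (by fun_prop)
  calc ∫⁻ x, F x ∂μ
      = ∫⁻ x, volume.restrict (Ioi (0 : ℝ)) {y | ENNReal.ofReal y < F x} ∂μ := by
        simp_rw [volume_lt_ofReal]
    _ = (μ.prod (volume.restrict (Ioi (0 : ℝ)))) {q : α × ℝ | ENNReal.ofReal q.2 < F q.1} := by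
        rw [Measure.prod_apply hm]; rfl
    _ = _ := by rw [Measure.prod_apply_symm hm]; rfl

lemma measure_lt_rearr (f : α → ℝ≥0∞) (y : ℝ≥0∞) :
    volume.restrict (Ioi (0 : ℝ)) {s | y < rearr μ f s} = μ {x | y < f x} := by
  simp_rw [lt_rearr_iff]
  exact volume_lt_ofReal _

/-- A function and its rearrangement are equimeasurable, hence have the same `L^p` norm. -/
lemma lintegral_rearr_rpow [SFinite μ] {f : α → ℝ≥0∞} (hf : Measurable f) {p : ℝ} (hp : 0 < p) :
    ∫⁻ s in Ioi (0 : ℝ), rearr μ f s ^ p = ∫⁻ x, f x ^ p ∂μ := by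
  have hm := (rearr_antitone (μ := μ) f).measurable
  have hlt : ∀ a b : ℝ≥0∞, a < b ^ p ↔ a ^ p⁻¹ < b := fun a b => by
    rw [ENNReal.rpow_inv_lt_iff hp]
  rw [layer_cake (hm.pow_const p), layer_cake (hf.pow_const p)]
  simp_rw [hlt, measure_lt_rearr]

lemma lintegral_rearr_sub [SFinite μ] {f : α → ℝ≥0∞} (hf : Measurable f) (c : ℝ≥0∞) :
    ∫⁻ s in Ioi (0 : ℝ), (rearr μ f s - c) = ∫⁻ x, (f x - c) ∂μ := by
  have hm := (rearr_antitone (μ := μ) f).measurable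
  rw [layer_cake (hm.sub_const c), layer_cake (hf.sub_const c)]
  simp_rw [lt_tsub_iff_right, measure_lt_rearr]

/-- Hardy–Littlewood: integrals over sets of measure at most `t` are dominated by the integral of
the rearrangement over `(0,t]`. -/
lemma setLIntegral_le_rearr [SFinite μ] {f : α → ℝ≥0∞} (hf : Measurable f) {t : ℝ}
    {E : Set α} (hEt : μ E ≤ ENNReal.ofReal t) :
    ∫⁻ x in E, f x ∂μ ≤ ∫⁻ s in Ioc (0 : ℝ) t, rearr μ f s := by
  have hm := (rearr_antitone (μ := μ) f).measurable
  rw [layer_cake hf, layer_cake hm]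
  refine lintegral_mono fun y => ?_
  have h1 : μ.restrict E {x | ENNReal.ofReal y < f x}
      ≤ min (ENNReal.ofReal t) (μ {x | ENNReal.ofReal y < f x}) := by
    refine le_min ?_ (Measure.restrict_le_self _)
    exact (measure_mono (subset_univ _)).trans (by simpa using hEt)
  refine h1.trans ?_
  have hms : MeasurableSet {s | ENNReal.ofReal y < rearr μ f s} :=
    measurableSet_lt measurable_const hm
  rw [Measure.restrict_apply hms]
  set m := min (ENNReal.ofReal t) (μ {x | ENNReal.ofReal y < f x})
  have hmt : m ≠ ∞ := ne_top_of_le_ne_top ENNReal.ofReal_ne_top (min_le_left _ _)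
  have : Ioo 0 m.toReal ⊆ {s | ENNReal.ofReal y < rearr μ f s} ∩ Ioc 0 t := by
    rintro s ⟨hs0, hs⟩
    rw [← ENNReal.ofReal_lt_iff_lt_toReal hs0.le hmt, lt_min_iff] at hs
    refine ⟨(lt_rearr_iff _ _ _).2 hs.2, hs0, ?_⟩
    by_contra! hts
    exact absurd hs.1 (not_lt.2 (ENNReal.ofReal_le_ofReal hts.le))
  refine le_trans ?_ (measure_mono this)
  rw [Real.volume_Ioo, sub_zero, ENNReal.ofReal_toReal hmt]

/-- The integral of the rearrangement over `(0,t]` exceeds `t f*(t)` by at most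
`∫ (|f| - f*(t))_+`. -/
lemma setLIntegral_rearr_le [SFinite μ] {f : α → ℝ≥0∞} (hf : Measurable f) (t : ℝ) :
    ∫⁻ s in Ioc (0 : ℝ) t, rearr μ f s
      ≤ ENNReal.ofReal t * rearr μ f t + ∫⁻ x, (f x - rearr μ f t) ∂μ := by
  have hm := (rearr_antitone (μ := μ) f).measurable
  set c := rearr μ f t
  calc ∫⁻ s in Ioc (0 : ℝ) t, rearr μ f s
      ≤ ∫⁻ s in Ioc (0 : ℝ) t, (c + (rearr μ f s - c)) :=
        lintegral_mono fun s => le_add_tsub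
    _ = ENNReal.ofReal t * c + ∫⁻ s in Ioc (0 : ℝ) t, (rearr μ f s - c) := by
        rw [lintegral_add_left measurable_const]
        simp [mul_comm]
    _ ≤ ENNReal.ofReal t * c + ∫⁻ s in Ioi (0 : ℝ), (rearr μ f s - c) := by
        gcongr
        exact Ioc_subset_Ioi_self
    _ = _ := by rw [lintegral_rearr_sub hf]

/-- Splitting `(0,t]` dyadically: `∫_0^t f* ≤ t ∑_j 2^{-j} f*(2^{-j} t)`. -/
lemma setLIntegral_rearr_dyadic (f : α → ℝ≥0∞) {t : ℝ} (ht : 0 < t) :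
    ∫⁻ s in Ioc (0 : ℝ) t, rearr μ f s
      ≤ ENNReal.ofReal t * ∑' j : ℕ, ENNReal.ofReal (1 / 2) ^ j * rearr μ f ((1 / 2) ^ j * t) := by
  have hsub : Ioc 0 t ⊆ ⋃ j : ℕ, Ioc ((1 / 2) ^ (j + 1) * t) ((1 / 2 : ℝ) ^ j * t) := by
    rintro x ⟨hx0, hxt⟩
    obtain ⟨j, hj1, hj2⟩ := exists_nat_pow_near_of_lt_one (x := x / t) (y := (1 / 2 : ℝ))
      (by positivity) ((div_le_one ht).2 hxt) (by norm_num) (by norm_num)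
    exact mem_iUnion.2 ⟨j, (lt_div_iff₀ ht).1 hj1, (div_le_iff₀ ht).1 hj2⟩
  have hterm : ∀ j : ℕ, ∫⁻ s in Ioc ((1 / 2) ^ (j + 1) * t) ((1 / 2 : ℝ) ^ j * t), rearr μ f s
      ≤ ENNReal.ofReal t *
        (ENNReal.ofReal (1 / 2) ^ (j + 1) * rearr μ f ((1 / 2) ^ (j + 1) * t)) := by
    intro j
    calc _ ≤ ∫⁻ s in Ioc ((1 / 2) ^ (j + 1) * t) ((1 / 2 : ℝ) ^ j * t),
          rearr μ f ((1 / 2) ^ (j + 1) * t) :=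
          setLIntegral_mono' measurableSet_Ioc fun s hs => rearr_antitone f hs.1.le
      _ = _ := by
          rw [setLIntegral_const, Real.volume_Ioc, ← ENNReal.ofReal_pow (by norm_num), ← mul_assoc,
            ← ENNReal.ofReal_mul ht.le, mul_comm]
          congr 2
          rw [pow_succ]; ring
  calc _ ≤ ∫⁻ s in ⋃ j : ℕ, Ioc ((1 / 2) ^ (j + 1) * t) ((1 / 2 : ℝ) ^ j * t), rearr μ f s :=
        lintegral_mono_set hsub
    _ ≤ ∑' j : ℕ, ∫⁻ s in Ioc ((1 / 2) ^ (j + 1) * t) ((1 / 2 : ℝ) ^ j * t), rearr μ f s :=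
        lintegral_iUnion_le _ _
    _ ≤ ∑' j : ℕ, ENNReal.ofReal t *
        (ENNReal.ofReal (1 / 2) ^ (j + 1) * rearr μ f ((1 / 2) ^ (j + 1) * t)) :=
        ENNReal.tsum_le_tsum hterm
    _ = ENNReal.ofReal t * ∑' j : ℕ,
        (ENNReal.ofReal (1 / 2) ^ (j + 1) * rearr μ f ((1 / 2) ^ (j + 1) * t)) :=
        ENNReal.tsum_mul_left
    _ ≤ _ := by
        refine mul_le_mul_right (ENNReal.tsum_comp_le_tsum_of_injective (add_left_injective 1)
          fun j : ℕ => ENNReal.ofReal (1 / 2) ^ j * rearr μ f ((1 / 2) ^ j * t)) _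

end Rearrangement

/-! ### Averages over sets of prescribed measure -/

/-- Euclidean space `ℝⁿ`. -/
abbrev Eu (n : ℕ) := EuclideanSpace ℝ (Fin n)

/-- The supremum of `∫_E |v|` over all sets `E` of measure at most `s`; it equals `s v**(s)`, but
unlike the latter is visibly subadditive and translation invariant. -/
def setSup {n : ℕ} (v : Eu n → ℝ) (s : ℝ) : ℝ≥0∞ :=
  ⨆ (E : Set (Eu n)) (_ : volume E ≤ ENNReal.ofReal s), ∫⁻ x in E, ‖v x‖ₑ

/-- The maximal average `s⁻¹ · sup_{|E| ≤ s} ∫_E |v|`. -/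
def maxAvg {n : ℕ} (v : Eu n → ℝ) (s : ℝ) : ℝ≥0∞ := ENNReal.ofReal (1 / s) * setSup v s

section SetSup

variable {n : ℕ}

lemma le_setSup (v : Eu n → ℝ) {s : ℝ} {E : Set (Eu n)} (hE : volume E ≤ ENNReal.ofReal s) :
    ∫⁻ x in E, ‖v x‖ₑ ≤ setSup v s :=
  le_iSup₂ (f := fun (E : Set (Eu n)) (_ : volume E ≤ ENNReal.ofReal s) => ∫⁻ x in E, ‖v x‖ₑ) E hE

lemma setSup_mono (v : Eu n → ℝ) : Monotone (setSup v) := by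
  intro s t hst
  exact iSup₂_le fun E hE => le_setSup v (hE.trans (ENNReal.ofReal_le_ofReal hst))

@[fun_prop]
lemma measurable_maxAvg (v : Eu n → ℝ) : Measurable (maxAvg v) := by
  have := (setSup_mono v).measurable
  unfold maxAvg
  fun_prop

lemma setSup_translate (v : Eu n → ℝ) (a : Eu n) (s : ℝ) :
    setSup (fun x => v (x + a)) s ≤ setSup v s := by
  refine iSup₂_le fun E hE => ?_
  rw [(measurePreserving_add_right volume a).setLIntegral_comp_emb
    (measurableEmbedding_addRight a) (fun x => ‖v x‖ₑ) E]
  refine le_setSup v ?_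
  rw [image_add_right, measure_preimage_add_right]
  exact hE

lemma setSup_le_add {u v w : Eu n → ℝ} (hu : Continuous u)
    (h : ∀ x, ‖w x‖ₑ ≤ ‖u x‖ₑ + ‖v x‖ₑ) (s : ℝ) : setSup w s ≤ setSup u s + setSup v s := by
  refine iSup₂_le fun E hE => ?_
  calc _ ≤ ∫⁻ x in E, (‖u x‖ₑ + ‖v x‖ₑ) := lintegral_mono h
    _ = (∫⁻ x in E, ‖u x‖ₑ) + ∫⁻ x in E, ‖v x‖ₑ := lintegral_add_left (by fun_prop) _
    _ ≤ _ := add_le_add (le_setSup u hE) (le_setSup v hE)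

lemma setSup_const_mul (c : ℝ) (v : Eu n → ℝ) (s : ℝ) :
    setSup (fun x => c * v x) s ≤ ‖c‖ₑ * setSup v s := by
  refine iSup₂_le fun E hE => ?_
  simp_rw [enorm_mul]
  rw [lintegral_const_mul' _ _ (by simp)]
  gcongr
  exact le_setSup v hE

lemma setSup_sum {ι : Type*} (S : Finset ι) {v : ι → Eu n → ℝ} (hv : ∀ i, Continuous (v i))
    (s : ℝ) : setSup (fun x => ∑ i ∈ S, v i x) s ≤ ∑ i ∈ S, setSup (v i) s := by
  classical
  induction S using Finset.induction_on with
  | empty => simp [setSup]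
  | insert a S ha ih =>
    rw [Finset.sum_insert ha]
    refine (setSup_le_add (u := v a) (v := fun x => ∑ i ∈ S, v i x) (hv a) (fun x => ?_) s).trans
      (by gcongr)
    rw [Finset.sum_insert ha]
    exact enorm_add_le _ _

lemma continuous_deltaOp {f : Eu n → ℝ} (hf : Continuous f) (h : Eu n) :
    Continuous (deltaOp h f) := by
  unfold deltaOp; fun_prop

lemma setSup_deltaOp_le {f : Eu n → ℝ} (hf : Continuous f) (h : Eu n) (s : ℝ) :
    setSup (deltaOp h f) s ≤ 2 * setSup f s := by
  have := setSup_le_add (u := fun x => f (x + h)) (v := f) (w := deltaOp h f) (by fun_prop)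
    (fun x => enorm_sub_le) s
  rw [two_mul]
  exact this.trans (add_le_add (setSup_translate f h s) le_rfl)

lemma setSup_deltaOp_add {f : Eu n → ℝ} (hf : Continuous f) (h h' : Eu n) (s : ℝ) :
    setSup (deltaOp (h + h') f) s ≤ setSup (deltaOp h f) s + setSup (deltaOp h' f) s := by
  refine (setSup_le_add (u := fun x => deltaOp h f (x + h')) (v := deltaOp h' f) ?_ (fun x => ?_)
    s).trans (add_le_add (setSup_translate _ h' s) le_rfl)
  · have := continuous_deltaOp hf h
    fun_prop
  · refine le_of_eq_of_le ?_ (enorm_add_le _ _)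
    simp only [deltaOp]
    congr 1
    rw [show x + (h + h') = x + h' + h by abel]
    ring

lemma setSup_deltaOp_sum {f : Eu n → ℝ} (hf : Continuous f) {ι : Type*} (S : Finset ι)
    (h : ι → Eu n) (s : ℝ) :
    setSup (deltaOp (∑ i ∈ S, h i) f) s ≤ ∑ i ∈ S, setSup (deltaOp (h i) f) s := by
  classical
  induction S using Finset.induction_on with
  | empty =>
    have : deltaOp (0 : Eu n) f = fun _ => 0 := by ext x; simp [deltaOp]
    simp [this, setSup]
  | insert a S ha ih =>
    rw [Finset.sum_insert ha, Finset.sum_insert ha]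
    exact (setSup_deltaOp_add hf _ _ s).trans (by gcongr)

/-- The inequality `s⁻¹ · sup_{|E| ≤ s} ∫_E |v| ≤ v**(s)`, multiplied by `s`. -/
lemma setSup_le_rearr {v : Eu n → ℝ} (hv : Continuous v) (s : ℝ) :
    setSup v s ≤ ∫⁻ σ in Ioc (0 : ℝ) s, rearr volume (fun x => ‖v x‖ₑ) σ :=
  iSup₂_le fun _ hE => setLIntegral_le_rearr (by fun_prop) hE

/-- Hardy's inequality `‖v**‖_p ≤ C ‖v‖_p`, in terms of the maximal average. -/
lemma hardy_maxAvg {p : ℝ} (hp : 1 < p) :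
    ∃ C : ℝ≥0∞, C ≠ ∞ ∧ ∀ v : Eu n → ℝ, Continuous v →
      wNorm p 0 (maxAvg v) ≤ C * eLpNorm v (ENNReal.ofReal p) volume := by
  have hp0 : 0 < p := by linarith
  obtain ⟨C, hC, h⟩ := wNorm_geom (p := p) (b := 0) (a := 1 / 2) (l := 1 / 2) hp (by norm_num)
    (by norm_num) (by
      have e : (1 / 2 : ℝ) * (1 / 2) ^ (0 - 1 / p) = (1 / 2) ^ (1 - 1 / p) := by
        rw [sub_eq_add_neg 1, Real.rpow_add (by norm_num), Real.rpow_one, zero_sub]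
      rw [e]
      refine Real.rpow_lt_one (by norm_num) (by norm_num) ?_
      rw [sub_pos, div_lt_one hp0]
      exact hp)
  refine ⟨C, hC, fun v hv => ?_⟩
  have hm := (rearr_antitone (μ := (volume : Measure (Eu n))) (fun x => ‖v x‖ₑ)).measurable
  refine (h _ (rearr volume fun x => ‖v x‖ₑ) hm fun s hs => ?_).trans (le_of_eq ?_)
  · unfold maxAvg
    calc _ ≤ ENNReal.ofReal (1 / s) * (ENNReal.ofReal s * ∑' j : ℕ, ENNReal.ofReal (1 / 2) ^ j *
          rearr volume (fun x => ‖v x‖ₑ) ((1 / 2) ^ j * s)) := by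
          gcongr
          exact (setSup_le_rearr hv s).trans (setLIntegral_rearr_dyadic _ hs)
      _ = _ := by
          rw [← mul_assoc, ← ENNReal.ofReal_mul (by positivity), one_div_mul_cancel hs.ne']
          simp
  · congr 1
    rw [eLpNorm_eq_lintegral_rpow_enorm_toReal (by simpa using hp0) ENNReal.ofReal_ne_top,
      ENNReal.toReal_ofReal hp0.le, ← lintegral_rearr_rpow (by fun_prop) hp0]
    simp [wNorm]

/-! ### Oscillation bounds by first differences -/

/-- The cube `[0,r]^n`. -/
def cube (n : ℕ) (r : ℝ) : Set (Eu n) := {u | ∀ i, u i ∈ Icc 0 r}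

lemma measurableSet_cube (r : ℝ) : MeasurableSet (cube n r) := by
  have : cube n r = ⋂ i, {u : Eu n | u i ∈ Icc 0 r} := by
    ext u; simp [cube]
  rw [this]
  exact MeasurableSet.iInter fun i => measurableSet_Icc.preimage (by fun_prop)

lemma volume_cube {r : ℝ} (hr : 0 ≤ r) : volume (cube n r) = ENNReal.ofReal (r ^ n) := by
  have h := (EuclideanSpace.volume_preserving_symm_measurableEquiv_toLp (Fin n)).measure_preimage
    (s := Icc (fun _ => 0) (fun _ => r)) measurableSet_Icc.nullMeasurableSet
  rw [Real.volume_Icc_pi] at h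
  simp only [sub_zero, Finset.prod_const, Finset.card_univ, Fintype.card_fin] at h
  rw [ENNReal.ofReal_pow hr, ← h]
  congr 1
  ext u
  simp [cube, Pi.le_def, forall_and]

lemma volume_cube_side (hn : n ≠ 0) {s : ℝ} (hs : 0 ≤ s) :
    volume (cube n (s ^ (1 / (n : ℝ)))) = ENNReal.ofReal s := by
  rw [volume_cube (by positivity), one_div, Real.rpow_inv_natCast_pow hs hn]

/-- Comparing `v` with its translates over a cube of measure `2s`: doubling the scale changes the
maximal average by at most first differences. -/
lemma setSup_double {v : Eu n → ℝ} (hv : Continuous v) (hn : n ≠ 0) {s : ℝ} (hs : 0 < s)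
    {M : ℝ≥0∞} (hM : ∀ u ∈ cube n ((2 * s) ^ (1 / (n : ℝ))), setSup (deltaOp u v) s ≤ M) :
    maxAvg v s ≤ maxAvg v (2 * s) + ENNReal.ofReal (1 / s) * M := by
  set K := cube n ((2 * s) ^ (1 / (n : ℝ)))
  have hK : volume K = ENNReal.ofReal (2 * s) := volume_cube_side hn (by positivity)
  have h0 : ENNReal.ofReal (2 * s) ≠ 0 := by simpa using hs
  have hvm : Measurable v := hv.measurable
  have hkey : ∀ E : Set (Eu n), volume E ≤ ENNReal.ofReal s →
      ENNReal.ofReal (2 * s) * ∫⁻ x in E, ‖v x‖ₑ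
        ≤ ENNReal.ofReal s * setSup v (2 * s) + ENNReal.ofReal (2 * s) * M := by
    intro E hE
    calc ENNReal.ofReal (2 * s) * ∫⁻ x in E, ‖v x‖ₑ
        = ∫⁻ u in K, ∫⁻ x in E, ‖v x‖ₑ := by
          rw [setLIntegral_const, hK, mul_comm]
      _ ≤ ∫⁻ u in K, ((∫⁻ x in E, ‖v (x + u)‖ₑ) + ∫⁻ x in E, ‖deltaOp u v x‖ₑ) := by
          refine lintegral_mono fun u => ?_
          rw [← lintegral_add_left (by fun_prop)]
          refine lintegral_mono fun x => ?_
          refine le_of_eq_of_le ?_ enorm_sub_le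
          simp [deltaOp]
      _ = (∫⁻ u in K, ∫⁻ x in E, ‖v (x + u)‖ₑ) + ∫⁻ u in K, ∫⁻ x in E, ‖deltaOp u v x‖ₑ := by
          refine lintegral_add_left ?_ _
          exact Measurable.lintegral_prod_right'
            (f := fun q : Eu n × Eu n => ‖v (q.2 + q.1)‖ₑ) (by fun_prop)
      _ = (∫⁻ x in E, ∫⁻ u in K, ‖v (u + x)‖ₑ) + ∫⁻ u in K, ∫⁻ x in E, ‖deltaOp u v x‖ₑ := by
          rw [lintegral_lintegral_swap]
          · simp_rw [add_comm]
          · exact Measurable.aemeasurable (by unfold Function.uncurry; fun_prop)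
      _ ≤ (∫⁻ x in E, setSup v (2 * s)) + ∫⁻ u in K, M := by
          gcongr ?_ + ?_
          · refine lintegral_mono fun x => ?_
            exact (le_setSup (fun u => v (u + x)) hK.le).trans (setSup_translate v x _)
          · exact setLIntegral_mono' (measurableSet_cube _) fun u hu =>
              (le_setSup _ hE).trans (hM u hu)
      _ ≤ _ := by
          rw [setLIntegral_const, setLIntegral_const, hK, mul_comm, mul_comm M]
          gcongr
  unfold maxAvg
  have h2 : setSup v s ≤ ENNReal.ofReal (1 / 2) * setSup v (2 * s) + M := by
    refine iSup₂_le fun E hE => ?_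
    have h3 : ENNReal.ofReal (2 * s) * (ENNReal.ofReal (1 / 2) * setSup v (2 * s) + M)
        = ENNReal.ofReal s * setSup v (2 * s) + ENNReal.ofReal (2 * s) * M := by
      rw [mul_add, ← mul_assoc, ← ENNReal.ofReal_mul (by positivity)]
      congr 3
      ring
    have h4 := hkey E hE
    rw [← h3] at h4
    exact (ENNReal.mul_le_mul_iff_right h0 ENNReal.ofReal_ne_top).1 h4
  calc _ ≤ ENNReal.ofReal (1 / s) * (ENNReal.ofReal (1 / 2) * setSup v (2 * s) + M) := by gcongr
    _ = _ := by
      rw [mul_add, ← mul_assoc, ← ENNReal.ofReal_mul (by positivity)]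
      congr 3
      field_simp

/-- If `|f(x)| > f*(s)` then on at least half of a cube of measure `2s` the translate `f(x+u)` is
at most `f*(s)`, so the excess `|f(x)| - f*(s)` is bounded by an average of `|Δ_u f(x)|`. -/
lemma osc_le {f : Eu n → ℝ} (hf : Continuous f) (hn : n ≠ 0) {s : ℝ} (hs : 0 < s)
    {M : ℝ≥0∞} (hM : ∀ u ∈ cube n ((2 * s) ^ (1 / (n : ℝ))), setSup (deltaOp u f) s ≤ M) :
    oscR volume f s ≤ ENNReal.ofReal (1 / s) * (2 * M) := by
  have habs : (fun x => ENNReal.ofReal |f x|) = fun x => ‖f x‖ₑ := by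
    ext x; rw [Real.enorm_eq_ofReal_abs]
  have hfm : Measurable fun x => ‖f x‖ₑ := by fun_prop
  unfold oscR dstarR rearrR
  rw [habs]
  set c := rearr volume (fun x => ‖f x‖ₑ) s with hc
  set D : Set (Eu n) := {x | c < ‖f x‖ₑ} with hD
  have hDm : MeasurableSet D := measurableSet_lt measurable_const hfm
  have hDs : volume D ≤ ENNReal.ofReal s := measure_rearr_lt_le _ s
  set K := cube n ((2 * s) ^ (1 / (n : ℝ)))
  have hK : volume K = ENNReal.ofReal (2 * s) := volume_cube_side hn (by positivity)
  have hKm : MeasurableSet K := measurableSet_cube _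
  have hs0 : ENNReal.ofReal s ≠ 0 := by simpa using hs
  have hpt : ∀ x, ENNReal.ofReal s * (‖f x‖ₑ - c) ≤ ∫⁻ u in K, ‖deltaOp u f x‖ₑ := by
    intro x
    have hvol : ENNReal.ofReal s ≤ volume (K \ ((fun u => x + u) ⁻¹' D)) := by
      have h1 : volume ((fun u => x + u) ⁻¹' D) ≤ ENNReal.ofReal s := by
        rw [measure_preimage_add]; exact hDs
      calc ENNReal.ofReal s = ENNReal.ofReal (2 * s) - ENNReal.ofReal s := by
            rw [← ENNReal.ofReal_sub _ hs.le]; congr 1; ring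
        _ ≤ volume K - volume ((fun u => x + u) ⁻¹' D) := by
            rw [hK]; exact tsub_le_tsub_left h1 _
        _ ≤ _ := le_measure_sdiff
    calc ENNReal.ofReal s * (‖f x‖ₑ - c)
        ≤ volume (K \ ((fun u => x + u) ⁻¹' D)) * (‖f x‖ₑ - c) := by gcongr
      _ = ∫⁻ u in K \ ((fun u => x + u) ⁻¹' D), (‖f x‖ₑ - c) := by
          rw [setLIntegral_const, mul_comm]
      _ ≤ ∫⁻ u in K \ ((fun u => x + u) ⁻¹' D), ‖deltaOp u f x‖ₑ := by
          refine setLIntegral_mono' (hKm.diff (hDm.preimage (by fun_prop))) fun u hu => ?_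
          have h2 : ‖f (x + u)‖ₑ ≤ c := by
            have := hu.2
            simpa [hD] using this
          rw [tsub_le_iff_right]
          calc ‖f x‖ₑ = ‖f (x + u) - deltaOp u f x‖ₑ := by simp [deltaOp]
            _ ≤ ‖f (x + u)‖ₑ + ‖deltaOp u f x‖ₑ := enorm_sub_le
            _ ≤ _ := by rw [add_comm]; gcongr
      _ ≤ _ := lintegral_mono_set sdiff_subset
  have hexc : ∫⁻ x, (‖f x‖ₑ - c) ≤ 2 * M := by
    have h1 : ∫⁻ x, (‖f x‖ₑ - c) = ∫⁻ x in D, (‖f x‖ₑ - c) := by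
      rw [← lintegral_indicator hDm]
      congr 1; ext x
      by_cases hx : x ∈ D
      · rw [indicator_of_mem hx]
      · rw [indicator_of_notMem hx]
        exact tsub_eq_zero_of_le (not_lt.1 hx)
    have h2 : ENNReal.ofReal s * ∫⁻ x in D, (‖f x‖ₑ - c) ≤ ENNReal.ofReal s * (2 * M) := by
      rw [← lintegral_const_mul _ (by fun_prop)]
      calc _ ≤ ∫⁻ x in D, ∫⁻ u in K, ‖deltaOp u f x‖ₑ := lintegral_mono hpt
        _ = ∫⁻ u in K, ∫⁻ x in D, ‖deltaOp u f x‖ₑ := by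
            refine lintegral_lintegral_swap (Measurable.aemeasurable ?_)
            unfold deltaOp
            fun_prop
        _ ≤ ∫⁻ u in K, M := setLIntegral_mono' hKm fun u hu => (le_setSup _ hDs).trans (hM u hu)
        _ = _ := by
            rw [setLIntegral_const, hK, ENNReal.ofReal_mul (by norm_num)]
            simp only [ENNReal.ofReal_ofNat]
            ring
    rw [h1]
    exact (ENNReal.mul_le_mul_iff_right hs0 ENNReal.ofReal_ne_top).1 h2
  rw [tsub_le_iff_right]
  calc _ ≤ ENNReal.ofReal (1 / s) * (ENNReal.ofReal s * c + ∫⁻ x, (‖f x‖ₑ - c)) := by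
        gcongr
        exact setLIntegral_rearr_le hfm s
    _ ≤ ENNReal.ofReal (1 / s) * (ENNReal.ofReal s * c + 2 * M) := by gcongr
    _ = _ := by
        rw [mul_add, ← mul_assoc, ← ENNReal.ofReal_mul (by positivity), one_div_mul_cancel hs.ne',
          ENNReal.ofReal_one, one_mul, add_comm]

end SetSup

/-! ### Steklov averages -/

section Averages

variable {n : ℕ}

/-- The Steklov average `x ↦ ∫_0^1 f(x + θ a) dθ` in the direction `a`. -/
def avgOp (a : Eu n) (f : Eu n → ℝ) : Eu n → ℝ := fun x => ∫ θ in (0 : ℝ)..1, f (x + θ • a)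

/-- Iterated Steklov averages in the directions `c • a`, `a` running through a list. -/
def avgL (c : ℝ) : List (Eu n) → (Eu n → ℝ) → Eu n → ℝ
  | [], f => f
  | a :: L, f => avgOp (c • a) (avgL c L f)

lemma continuous_avgOp {f : Eu n → ℝ} (hf : Continuous f) (a : Eu n) :
    Continuous (avgOp a f) := by
  unfold avgOp
  refine intervalIntegral.continuous_parametric_intervalIntegral_of_continuous' ?_ 0 1
  unfold Function.uncurry
  fun_prop

lemma continuous_avgL {f : Eu n → ℝ} (hf : Continuous f) (c : ℝ) (L : List (Eu n)) :
    Continuous (avgL c L f) := by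
  induction L with
  | nil => exact hf
  | cons a L ih => exact continuous_avgOp ih _

lemma avgL_append (c : ℝ) (L L' : List (Eu n)) (f : Eu n → ℝ) :
    avgL c (L ++ L') f = avgL c L (avgL c L' f) := by
  induction L with
  | nil => rfl
  | cons a L ih => simp only [List.cons_append, avgL, ih]

lemma deltaOp_avgOp {f : Eu n → ℝ} (hf : Continuous f) (h a : Eu n) :
    deltaOp h (avgOp a f) = avgOp a (deltaOp h f) := by
  ext x
  simp only [deltaOp, avgOp]
  rw [← intervalIntegral.integral_sub]
  · simp_rw [add_right_comm x h]
  · exact Continuous.intervalIntegrable (by fun_prop) _ _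
  · exact Continuous.intervalIntegrable (by fun_prop) _ _

lemma deltaOp_avgL {f : Eu n → ℝ} (hf : Continuous f) (h : Eu n) (c : ℝ) (L : List (Eu n)) :
    deltaOp h (avgL c L f) = avgL c L (deltaOp h f) := by
  induction L with
  | nil => rfl
  | cons a L ih =>
    simp only [avgL]
    rw [deltaOp_avgOp (continuous_avgL hf c L), ih]

lemma setSup_avgOp_le {f : Eu n → ℝ} (hf : Continuous f) (a : Eu n) (s : ℝ) :
    setSup (avgOp a f) s ≤ setSup f s := by
  have hfm : Measurable f := hf.measurable
  refine iSup₂_le fun E hE => ?_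
  calc ∫⁻ x in E, ‖avgOp a f x‖ₑ
      ≤ ∫⁻ x in E, ∫⁻ θ in Ioc (0 : ℝ) 1, ‖f (x + θ • a)‖ₑ := by
        refine lintegral_mono fun x => ?_
        simp only [avgOp]
        rw [intervalIntegral.integral_of_le zero_le_one]
        exact enorm_integral_le_lintegral_enorm _
    _ = ∫⁻ θ in Ioc (0 : ℝ) 1, ∫⁻ x in E, ‖f (x + θ • a)‖ₑ := by
        refine lintegral_lintegral_swap (Measurable.aemeasurable ?_)
        unfold Function.uncurry
        fun_prop
    _ ≤ ∫⁻ θ in Ioc (0 : ℝ) 1, setSup f s := by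
        refine lintegral_mono fun θ => ?_
        exact (le_setSup (fun x => f (x + θ • a)) hE).trans (setSup_translate f _ s)
    _ = setSup f s := by simp

lemma setSup_avgL_le {f : Eu n → ℝ} (hf : Continuous f) (c : ℝ) (L : List (Eu n)) (s : ℝ) :
    setSup (avgL c L f) s ≤ setSup f s := by
  induction L with
  | nil => exact le_rfl
  | cons a L ih => exact (setSup_avgOp_le (continuous_avgL hf c L) _ s).trans ih

/-- Differencing a Steklov average along its own direction: the discrete form of
`∂_e S_{σe} = σ⁻¹ Δ_{σe}`. -/
lemma deltaOp_avgOp_self {w : Eu n → ℝ} (hw : Continuous w) (e : Eu n) (c : ℝ) {σ : ℝ}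
    (hσ : 0 < σ) (x : Eu n) :
    deltaOp (c • e) (avgOp (σ • e) w) x = (c / σ) * avgOp (c • e) (deltaOp (σ • e) w) x := by
  set φ : ℝ → ℝ := fun y => w (x + y • e) with hφ
  have hφc : Continuous φ := by rw [hφ]; fun_prop
  have hi : ∀ a b, IntervalIntegrable φ volume a b := fun a b => hφc.intervalIntegrable a b
  have a1 : avgOp (σ • e) w (x + c • e) = ∫ θ in (0 : ℝ)..1, φ (σ * θ + c) := by
    simp only [avgOp, hφ]
    congr 1; ext θ; congr 1; module
  have a2 : avgOp (σ • e) w x = ∫ θ in (0 : ℝ)..1, φ (σ * θ + 0) := by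
    simp only [avgOp, hφ]
    congr 1; ext θ; congr 1; module
  have a3 : avgOp (c • e) (deltaOp (σ • e) w) x
      = (∫ θ in (0 : ℝ)..1, φ (c * θ + σ)) - ∫ θ in (0 : ℝ)..1, φ (c * θ + 0) := by
    rw [← intervalIntegral.integral_sub]
    · simp only [avgOp, deltaOp, hφ]
      congr 1; ext θ; congr 2 <;> module
    · exact Continuous.intervalIntegrable (by fun_prop) _ _
    · exact Continuous.intervalIntegrable (by fun_prop) _ _
  have h1 := intervalIntegral.mul_integral_comp_mul_add (a := 0) (b := 1) (f := φ) σ c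
  have h2 := intervalIntegral.mul_integral_comp_mul_add (a := 0) (b := 1) (f := φ) σ 0
  have h3 := intervalIntegral.mul_integral_comp_mul_add (a := 0) (b := 1) (f := φ) c σ
  have h4 := intervalIntegral.mul_integral_comp_mul_add (a := 0) (b := 1) (f := φ) c 0
  have e1 := intervalIntegral.integral_add_adjacent_intervals (hi 0 c) (hi c (σ + c))
  have e2 := intervalIntegral.integral_add_adjacent_intervals (hi 0 σ) (hi σ (σ + c))
  simp only [mul_zero, zero_add, mul_one, add_zero] at h1 h2 h3 h4 a2 a3
  rw [add_comm c σ] at h3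
  simp only [deltaOp] at *
  rw [a1, a2, a3]
  field_simp
  linarith

/-- One factor of the iterated average in the direction `a` turns `Δ_{ca}` into
`(c/σ) Δ_{σa}`; all the other averages are contractions. -/
lemma setSup_deltaOp_avgL {w : Eu n → ℝ} (hw : Continuous w) {σ : ℝ} (hσ : 0 < σ) (c : ℝ)
    {a : Eu n} {L : List (Eu n)} (ha : a ∈ L) (s : ℝ) :
    setSup (deltaOp (c • a) (avgL σ L w)) s
      ≤ ENNReal.ofReal (|c| / σ) * setSup (deltaOp (σ • a) w) s := by
  induction L with
  | nil => simp at ha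
  | cons b L ih =>
    have hL := continuous_avgL hw σ L
    by_cases hab : a = b
    · subst hab
      have : deltaOp (c • a) (avgL σ (a :: L) w)
          = fun x => (c / σ) * avgOp (c • a) (deltaOp (σ • a) (avgL σ L w)) x := by
        ext x
        exact deltaOp_avgOp_self hL a c hσ x
      rw [this]
      refine (setSup_const_mul _ _ s).trans ?_
      rw [Real.enorm_eq_ofReal_abs, abs_div, abs_of_pos hσ]
      gcongr
      refine (setSup_avgOp_le (continuous_deltaOp hL _) _ s).trans ?_
      rw [deltaOp_avgL hw]
      exact setSup_avgL_le (continuous_deltaOp hw _) _ _ s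
    · have ha' : a ∈ L := by simpa [hab] using ha
      simp only [avgL]
      rw [deltaOp_avgOp hL]
      exact (setSup_avgOp_le (continuous_deltaOp hL _) _ s).trans (ih ha')

/-- The standard basis vector `e_i`. -/
def stdVec (i : Fin n) : Eu n := EuclideanSpace.single i 1

lemma norm_stdVec (i : Fin n) : ‖stdVec i‖ = 1 := by simp [stdVec]

/-- The list consisting of `m` copies of the standard basis. -/
def stdDirs (n : ℕ) : ℕ → List (Eu n)
  | 0 => []
  | m + 1 => (List.finRange n).map stdVec ++ stdDirs n m

/-- A difference `Δ_u` with `u ∈ [0,r]^n` splits into differences along the axes, and each of these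
is absorbed by one Steklov average of the same direction: one copy of the basis is used up and a
factor `r/σ` is gained. -/
lemma setSup_deltaOp_cube {w : Eu n → ℝ} (hw : Continuous w) {σ r : ℝ} (hσ : 0 < σ)
    (m : ℕ) {u : Eu n} (hu : u ∈ cube n r) (s : ℝ) :
    setSup (deltaOp u (avgL σ (stdDirs n (m + 1)) w)) s
      ≤ ENNReal.ofReal (r / σ) *
        ∑ i, setSup (avgL σ (stdDirs n m) (deltaOp (σ • stdVec i) w)) s := by
  have hu' : u = ∑ i, u i • stdVec i := by
    have := (EuclideanSpace.basisFun (Fin n) ℝ).sum_repr u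
    simpa [stdVec] using this.symm
  have hc := continuous_avgL hw σ (stdDirs n m)
  rw [hu', stdDirs, avgL_append, Finset.mul_sum]
  refine (setSup_deltaOp_sum (continuous_avgL hc _ _) _ _ s).trans (Finset.sum_le_sum fun i _ => ?_)
  refine (setSup_deltaOp_avgL hc hσ (u i) (List.mem_map_of_mem (List.mem_finRange i)) s).trans ?_
  rw [deltaOp_avgL hw]
  have := (hu i).1
  have := (hu i).2
  gcongr
  rwa [abs_of_nonneg (by assumption)]

end Averages

/-! ### Mixed differences -/

section Mixed

variable {n : ℕ}

/-- The mixed difference `Δ_{a_1} ⋯ Δ_{a_k} f` along a list of directions. -/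
def mixD : List (Eu n) → (Eu n → ℝ) → Eu n → ℝ
  | [], f => f
  | a :: L, f => deltaOp a (mixD L f)

lemma mixD_concat (L : List (Eu n)) (a : Eu n) (f : Eu n → ℝ) :
    mixD (L ++ [a]) f = mixD L (deltaOp a f) := by
  induction L with
  | nil => rfl
  | cons b L ih => simp only [List.cons_append, mixD, ih]

/-- The mixed difference on `ℝⁿ × ℝⁿ` in the directions `(a, -a/j)`, where `j` is the position of
`a` counted from the end of the list. -/
def mix2 : List (Eu n) → (Eu n → Eu n → ℝ) → Eu n → Eu n → ℝ
  | [], G => G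
  | a :: L, G => fun x y =>
      mix2 L G (x + a) (y - ((L.length : ℝ) + 1)⁻¹ • a) - mix2 L G x y

lemma mix2_const (L : List (Eu n)) (f : Eu n → ℝ) (x y : Eu n) :
    mix2 L (fun x _ => f x) x y = mixD L f x := by
  induction L generalizing x y with
  | nil => rfl
  | cons a L ih => simp only [mix2, mixD, deltaOp, ih]

lemma mix2_congr (L : List (Eu n)) (f : Eu n → ℝ) (l : ℕ) {x y x' y' : Eu n}
    (h : x + l • y = x' + l • y') :
    mix2 L (fun x y => f (x + l • y)) x y = mix2 L (fun x y => f (x + l • y)) x' y' := by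
  induction L generalizing x y x' y' with
  | nil => simp only [mix2, h]
  | cons a L ih =>
    simp only [mix2]
    rw [ih h, ih (x' := x' + a) (y' := y' - ((L.length : ℝ) + 1)⁻¹ • a)]
    rw [smul_sub, smul_sub]
    calc _ = (x + l • y) + (a - l • ((L.length : ℝ) + 1)⁻¹ • a) := by abel
      _ = _ := by rw [h]; abel

/-- The function `(x,y) ↦ f(x + l y)` is constant in the direction `(a, -a/l)`. -/
lemma mix2_eq_zero (L : List (Eu n)) (f : Eu n → ℝ) {l : ℕ} (h1 : 1 ≤ l) (h2 : l ≤ L.length)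
    (x y : Eu n) : mix2 L (fun x y => f (x + l • y)) x y = 0 := by
  induction L generalizing x y with
  | nil => simp at h2; omega
  | cons a L ih =>
    simp only [mix2]
    rcases Nat.lt_or_ge L.length l with h | h
    · have hl : (l : ℝ) = (L.length : ℝ) + 1 := by
        have : l = L.length + 1 := by simp at h2; omega
        rw [this]; push_cast; rfl
      rw [sub_eq_zero]
      apply mix2_congr
      rw [← hl, smul_sub, ← Nat.cast_smul_eq_nsmul ℝ l ((l : ℝ)⁻¹ • a), smul_smul,
        mul_inv_cancel₀ (by positivity), one_smul]
      abel
    · rw [ih h, ih h, sub_zero]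

lemma mix2_sum (L : List (Eu n)) {ι : Type*} (S : Finset ι) (c : ι → ℝ)
    (G : ι → Eu n → Eu n → ℝ) (x y : Eu n) :
    mix2 L (fun x y => ∑ i ∈ S, c i * G i x y) x y = ∑ i ∈ S, c i * mix2 L (G i) x y := by
  induction L generalizing x y with
  | nil => rfl
  | cons a L ih =>
    simp only [mix2, ih]
    rw [← Finset.sum_sub_distrib]
    simp only [mul_sub]

lemma continuous_mix2 (L : List (Eu n)) {G : Eu n → Eu n → ℝ}
    (hG : Continuous fun q : Eu n × Eu n => G q.1 q.2) :
    Continuous fun q : Eu n × Eu n => mix2 L G q.1 q.2 := by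
  induction L with
  | nil => exact hG
  | cons a L ih =>
    simp only [mix2]
    exact (ih.comp (by fun_prop : Continuous fun q : Eu n × Eu n =>
      (q.1 + a, q.2 - ((L.length : ℝ) + 1)⁻¹ • a))).sub ih

/-- Every step of the mixed difference moves `y` by at most `ρ`, so starting from `y` the variable
stays in the ball of radius `R`, where the `L^p` norms are bounded by `B`. -/
lemma eLpNorm_mix2_le {q : ℝ≥0∞} (hq : 1 ≤ q) (L : List (Eu n)) {G : Eu n → Eu n → ℝ}
    (hG : Continuous fun q : Eu n × Eu n => G q.1 q.2) {ρ R : ℝ} {B : ℝ≥0∞}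
    (hL : ∀ a ∈ L, ‖a‖ ≤ ρ) (hB : ∀ y, ‖y‖ ≤ R → eLpNorm (fun x => G x y) q volume ≤ B)
    (y : Eu n) (hy : ‖y‖ + L.length * ρ ≤ R) :
    eLpNorm (fun x => mix2 L G x y) q volume ≤ 2 ^ L.length * B := by
  induction L generalizing y with
  | nil => simpa [mix2] using hB y (by simpa using hy)
  | cons a L ih =>
    have hc := continuous_mix2 L hG
    have hc' : ∀ y, Continuous fun x => mix2 L G x y := fun y =>
      hc.comp (by fun_prop : Continuous fun x : Eu n => (x, y))
    have ha := hL a (by simp)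
    have hρ : 0 ≤ ρ := (norm_nonneg a).trans ha
    have ih' := ih fun b hb => hL b (by simp [hb])
    simp only [List.length_cons, Nat.cast_add, Nat.cast_one] at hy
    set y' := y - ((L.length : ℝ) + 1)⁻¹ • a with hy'
    have hyn : ‖y'‖ ≤ ‖y‖ + ρ := by
      refine (norm_sub_le _ _).trans ?_
      rw [norm_smul, norm_inv, Real.norm_of_nonneg (by positivity)]
      gcongr
      refine (mul_le_of_le_one_left (norm_nonneg _) ?_).trans ha
      exact inv_le_one_of_one_le₀ (by linarith [(Nat.cast_nonneg L.length : (0 : ℝ) ≤ _)])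
    have t1 : eLpNorm (fun x => mix2 L G (x + a) y') q volume ≤ 2 ^ L.length * B := by
      have := eLpNorm_comp_measurePreserving (p := q) (g := fun x => mix2 L G x y')
        (hc' y').aestronglyMeasurable (measurePreserving_add_right volume a)
      refine (le_of_eq this).trans (ih' y' ?_)
      linarith
    have t2 := ih' y (by linarith)
    have := eLpNorm_sub_le (p := q) (f := fun x => mix2 L G (x + a) y') (g := fun x => mix2 L G x y)
      (μ := volume) ((hc' y').comp (continuous_add_const a)).aestronglyMeasurable
      (hc' y).aestronglyMeasurable hq
    refine this.trans ((add_le_add t1 t2).trans (le_of_eq ?_))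
    rw [List.length_cons]
    ring

lemma iterate_deltaOp_eq (f : Eu n → ℝ) (k : ℕ) (x y : Eu n) :
    (deltaOp y)^[k] f x
      = ∑ l ∈ Finset.range (k + 1), ((-1) ^ (k - l) * (k.choose l : ℝ)) * f (x + l • y) := by
  have := fwdDiff_iter_eq_sum_shift y f k x
  refine Eq.trans (Eq.trans ?_ this) ?_
  · rfl
  · refine Finset.sum_congr rfl fun l _ => ?_
    rw [zsmul_eq_mul]
    push_cast
    ring

lemma continuous_iterate_deltaOp {f : Eu n → ℝ} (hf : Continuous f) (k : ℕ) :
    Continuous fun q : Eu n × Eu n => (deltaOp q.2)^[k] f q.1 := by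
  simp_rw [iterate_deltaOp_eq]
  fun_prop

/-- Mixed differences are controlled by pure ones: applying the mixed difference in the directions
`(a_j, -a_j/j)` to `(x,y) ↦ Δ_y^k f(x) = ∑_l ± C(k,l) f(x + l y)` annihilates all the terms with
`1 ≤ l ≤ k`. -/
lemma eLpNorm_mixD_le {p : ℝ} (hp : 1 < p) {f : Eu n → ℝ} (hf : Continuous f)
    (L : List (Eu n)) {ρ T : ℝ} (hL : ∀ a ∈ L, ‖a‖ ≤ ρ) (hT : L.length * ρ ≤ T) :
    eLpNorm (mixD L f) (ENNReal.ofReal p) volume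
      ≤ 2 ^ L.length * smoothnessModulus n L.length p f T := by
  set k := L.length with hk
  have h := eLpNorm_mix2_le (q := ENNReal.ofReal p) (by simpa using hp.le) L
    (continuous_iterate_deltaOp hf k) (R := T) (B := smoothnessModulus n k p f T) hL
    (fun y hy => le_iSup₂ (f := fun (h : Eu n) (_ : ‖h‖ ≤ T) =>
      eLpNorm ((deltaOp h)^[k] f) (ENNReal.ofReal p) volume) y hy) 0 (by simpa using hT)
  have e : ∀ x, mix2 L (fun x y => (deltaOp y)^[k] f x) x 0 = (-1) ^ k * mixD L f x := by
    intro x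
    simp_rw [iterate_deltaOp_eq]
    rw [mix2_sum L _ _ (fun (l : ℕ) x y => f (x + l • y)), Finset.sum_range_succ',
      Finset.sum_eq_zero, zero_add]
    · simp only [zero_smul, add_zero, mix2_const]
      simp
    · intro l hl
      rw [mix2_eq_zero L f (by omega) (by simp at hl; omega), mul_zero]
  refine le_trans (le_of_eq ?_) h
  refine eLpNorm_congr_enorm_ae (Eventually.of_forall fun x => ?_)
  rw [e x, enorm_mul]
  simp [enorm_pow]

end Mixed

/-! ### The Sobolev-type estimate for Steklov averages -/

section Chain

variable {n : ℕ}

/-- Iterating `A(s) ≤ A(2s) + H(s)` up to infinity. The factor `1^j` gives the series the shape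
used in `wNorm_geom`. -/
lemma le_tsum_dyadic {A H : ℝ → ℝ≥0∞} (h : ∀ s > 0, A s ≤ A (2 * s) + H s)
    (hA : Tendsto A atTop (𝓝 0)) {s : ℝ} (hs : 0 < s) :
    A s ≤ ∑' j : ℕ, ENNReal.ofReal 1 ^ j * H (2 ^ j * s) := by
  have key : ∀ N : ℕ, A s ≤ A (2 ^ N * s) + ∑ j ∈ Finset.range N, H (2 ^ j * s) := by
    intro N
    induction N with
    | zero => simp
    | succ N ih =>
      refine ih.trans ?_
      rw [Finset.sum_range_succ, pow_succ', mul_assoc 2, add_comm (∑ j ∈ _, _), ← add_assoc]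
      gcongr
      exact h _ (by positivity)
  have key2 : ∀ N : ℕ, A s ≤ A (2 ^ N * s) + ∑' j : ℕ, ENNReal.ofReal 1 ^ j * H (2 ^ j * s) := by
    intro N
    refine (key N).trans ?_
    gcongr
    simp only [ENNReal.ofReal_one, one_pow, one_mul]
    exact ENNReal.sum_le_tsum _
  have ht : Tendsto (fun N : ℕ => A (2 ^ N * s)) atTop (𝓝 0) :=
    hA.comp ((tendsto_pow_atTop_atTop_of_one_lt (by norm_num)).atTop_mul_const hs)
  have := ht.add_const (∑' j : ℕ, ENNReal.ofReal 1 ^ j * H (2 ^ j * s))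
  rw [zero_add] at this
  exact ge_of_tendsto' this key2

lemma wNorm_shift {p : ℝ} (b β : ℝ) (F : ℝ → ℝ≥0∞) :
    wNorm p b (fun s => ENNReal.ofReal (s ^ β) * F s) = wNorm p (b - β) F := by
  unfold wNorm
  congr 1
  refine setLIntegral_congr_fun measurableSet_Ioi fun s (hs : 0 < s) => ?_
  dsimp only
  rw [← mul_assoc, ← ENNReal.ofReal_rpow_of_pos hs,
    ← ENNReal.rpow_add _ _ (by simpa using hs) ENNReal.ofReal_ne_top]
  congr 3
  ring

lemma tendsto_maxAvg_of_le {v w : Eu n → ℝ} {c : ℝ≥0∞} (hc : c ≠ ∞)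
    (h : ∀ s, setSup v s ≤ c * setSup w s) (hw : Tendsto (maxAvg w) atTop (𝓝 0)) :
    Tendsto (maxAvg v) atTop (𝓝 0) := by
  have h1 := ENNReal.Tendsto.const_mul hw (Or.inr hc) (a := c)
  rw [mul_zero] at h1
  refine tendsto_of_tendsto_of_tendsto_of_le_of_le tendsto_const_nhds h1 (fun _ => zero_le)
    fun s => ?_
  simp only [maxAvg]
  calc _ ≤ ENNReal.ofReal (1 / s) * (c * setSup w s) := by gcongr; exact h s
    _ = _ := by ring

/-- A derivative-free Sobolev inequality. Each of the `m` steps trades one layer of averages at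
scale `σ` for a factor `s^{1/n}/σ` and one difference of step `σ`; the resulting dyadic sums are
geometric because `m/n < 1/p`. -/
lemma sobolev_chain (hn : n ≠ 0) {p : ℝ} (hp : 1 < p) (m : ℕ) (hm : (m : ℝ) / n < 1 / p) :
    ∃ C : ℝ≥0∞, C ≠ ∞ ∧ ∀ σ : ℝ, 0 < σ → ∀ w : Eu n → ℝ, Continuous w →
      Tendsto (maxAvg w) atTop (𝓝 0) → ∀ B : ℝ≥0∞,
      (∀ I : List (Fin n), I.length = m →
        eLpNorm (mixD (I.map fun i => σ • stdVec i) w) (ENNReal.ofReal p) volume ≤ B) →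
      wNorm p (m / n) (maxAvg (avgL σ (stdDirs n m) w)) ≤ C * ENNReal.ofReal (1 / σ) ^ m * B := by
  have hn' : (0 : ℝ) < n := by positivity
  induction m with
  | zero =>
    obtain ⟨C, hC, h⟩ := hardy_maxAvg (n := n) hp
    refine ⟨C, hC, fun σ _ w hw _ B hB => ?_⟩
    simp only [Nat.cast_zero, zero_div, pow_zero, mul_one, stdDirs, avgL]
    refine (h w hw).trans ?_
    gcongr
    exact hB [] rfl
  | succ m ih =>
    obtain ⟨C, hC, ih⟩ := ih (lt_of_le_of_lt (by gcongr; simp) hm)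
    obtain ⟨C', hC', hgeom⟩ := wNorm_geom (p := p) (b := ((m + 1 : ℕ) : ℝ) / n) (a := 1) (l := 2)
      hp (by norm_num) (by norm_num) (by
        rw [one_mul]
        exact Real.rpow_lt_one_of_one_lt_of_neg (by norm_num) (by linarith))
    refine ⟨C' * ENNReal.ofReal (2 ^ (1 / (n : ℝ))) * n * C, ?_, fun σ hσ w hw hw0 B hB => ?_⟩
    · exact ENNReal.mul_ne_top (ENNReal.mul_ne_top (ENNReal.mul_ne_top hC' ENNReal.ofReal_ne_top)
        (ENNReal.natCast_ne_top n)) hC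
    set v := avgL σ (stdDirs n (m + 1)) w with hv
    have hvc : Continuous v := continuous_avgL hw _ _
    have hv0 : Tendsto (maxAvg v) atTop (𝓝 0) :=
      tendsto_maxAvg_of_le (c := 1) (by simp)
        (fun s => by rw [one_mul]; exact setSup_avgL_le hw _ _ s) hw0
    set vi : Fin n → Eu n → ℝ := fun i => avgL σ (stdDirs n m) (deltaOp (σ • stdVec i) w) with hvi
    set H : ℝ → ℝ≥0∞ := fun s => ENNReal.ofReal (2 ^ (1 / (n : ℝ)) / σ) *
      (ENNReal.ofReal (s ^ (1 / (n : ℝ))) * ∑ i, maxAvg (vi i) s) with hH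
    have hHm : Measurable H := by
      have := Finset.measurable_sum Finset.univ fun i (_ : i ∈ Finset.univ) => measurable_maxAvg (vi i)
      fun_prop
    have hstep : ∀ s > 0, maxAvg v s ≤ maxAvg v (2 * s) + H s := by
      intro s hs
      refine (setSup_double hvc hn hs fun u hu => setSup_deltaOp_cube hw hσ m hu s).trans
        (le_of_eq ?_)
      congr 1
      simp only [hH, maxAvg]
      rw [← Finset.mul_sum, Real.mul_rpow (by norm_num) hs.le, mul_div_right_comm,
        ENNReal.ofReal_mul (by positivity)]
      ring
    have hi : ∀ i, wNorm p (m / n) (maxAvg (vi i)) ≤ C * ENNReal.ofReal (1 / σ) ^ m * B := by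
      intro i
      refine ih σ hσ _ (continuous_deltaOp hw _) ?_ B fun I hI => ?_
      · exact tendsto_maxAvg_of_le (c := 2) (by simp) (setSup_deltaOp_le hw _) hw0
      · have := hB (I ++ [i]) (by simp [hI])
        rwa [List.map_append, List.map_cons, List.map_nil, mixD_concat] at this
    have hsumm : Measurable fun s => ∑ i, maxAvg (vi i) s :=
      Finset.measurable_sum Finset.univ fun i _ => measurable_maxAvg (vi i)
    calc wNorm p (((m + 1 : ℕ) : ℝ) / n) (maxAvg v)
        ≤ C' * wNorm p (((m + 1 : ℕ) : ℝ) / n) H :=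
          hgeom _ _ hHm fun s hs => le_tsum_dyadic hstep hv0 hs
      _ = C' * (ENNReal.ofReal (2 ^ (1 / (n : ℝ)) / σ) *
            wNorm p (m / n) (fun s => ∑ i, maxAvg (vi i) s)) := by
          rw [hH, wNorm_const_mul hp (by fun_prop), wNorm_shift]
          congr 3
          push_cast
          ring
      _ ≤ C' * (ENNReal.ofReal (2 ^ (1 / (n : ℝ)) / σ) *
            ∑ i : Fin n, C * ENNReal.ofReal (1 / σ) ^ m * B) := by
          gcongr
          exact (wNorm_sum_le hp _ fun i => measurable_maxAvg _).trans
            (Finset.sum_le_sum fun i _ => hi i)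
      _ = _ := by
          rw [Finset.sum_const, Finset.card_univ, Fintype.card_fin, nsmul_eq_mul, div_eq_mul_one_div,
            ENNReal.ofReal_mul (by positivity), pow_succ]
          ring

end Chain

/-! ### Averaged higher-order differences -/

section Decomposition

variable {n : ℕ}

lemma continuous_avgL_joint {G : Eu n → Eu n → ℝ}
    (hG : Continuous fun q : Eu n × Eu n => G q.1 q.2) (τ : ℝ) (L : List (Eu n)) :
    Continuous fun q : Eu n × Eu n => avgL τ L (G q.1) q.2 := by
  induction L with
  | nil => exact hG
  | cons a L ih =>
    simp only [avgL, avgOp]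
    refine intervalIntegral.continuous_parametric_intervalIntegral_of_continuous' ?_ 0 1
    exact ih.comp (by fun_prop : Continuous fun r : (Eu n × Eu n) × ℝ =>
      (r.1.1, r.1.2 + r.2 • τ • a))

/-- Averaging over a parameter does not increase a uniform `L^p` bound (Jensen and Tonelli). -/
lemma eLpNorm_avg_le {p : ℝ} (hp : 1 < p) {Φ : Eu n → ℝ → ℝ}
    (hΦ : Continuous fun q : Eu n × ℝ => Φ q.1 q.2) {B : ℝ≥0∞}
    (hB : ∀ θ ∈ Ioc (0 : ℝ) 1, eLpNorm (fun x => Φ x θ) (ENNReal.ofReal p) volume ≤ B) :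
    eLpNorm (fun x => ∫ θ in (0 : ℝ)..1, Φ x θ) (ENNReal.ofReal p) volume ≤ B := by
  have hp0 : 0 < p := by linarith
  have hq0 : ENNReal.ofReal p ≠ 0 := by simpa using hp0
  have hqt : ENNReal.ofReal p ≠ ∞ := ENNReal.ofReal_ne_top
  have hpr : (ENNReal.ofReal p).toReal = p := ENNReal.toReal_ofReal hp0.le
  have hprob : IsProbabilityMeasure (volume.restrict (Ioc (0 : ℝ) 1)) := ⟨by simp⟩
  have hm : Measurable fun q : Eu n × ℝ => Φ q.1 q.2 := hΦ.measurable
  have hmx : ∀ x, Continuous (Φ x) := fun x => hΦ.comp (by fun_prop : Continuous fun θ => (x, θ))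
  rw [eLpNorm_eq_lintegral_rpow_enorm_toReal hq0 hqt, hpr, one_div,
    ENNReal.rpow_inv_le_iff hp0]
  calc ∫⁻ x, ‖∫ θ in (0 : ℝ)..1, Φ x θ‖ₑ ^ p
      ≤ ∫⁻ x, ∫⁻ θ in Ioc (0 : ℝ) 1, ‖Φ x θ‖ₑ ^ p := by
        refine lintegral_mono fun x => ?_
        rw [intervalIntegral.integral_of_le zero_le_one]
        have h1 := eLpNorm'_le_eLpNorm'_of_exponent_le (p := 1) (q := p) (by norm_num) hp.le
          (volume.restrict (Ioc (0 : ℝ) 1)) (hmx x).aestronglyMeasurable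
        simp only [eLpNorm', ENNReal.rpow_one, div_one] at h1
        rw [one_div, ENNReal.le_rpow_inv_iff hp0] at h1
        refine le_trans ?_ h1
        gcongr
        exact enorm_integral_le_lintegral_enorm _
    _ = ∫⁻ θ in Ioc (0 : ℝ) 1, ∫⁻ x, ‖Φ x θ‖ₑ ^ p := by
        refine lintegral_lintegral_swap (Measurable.aemeasurable ?_)
        unfold Function.uncurry
        exact hm.enorm.pow_const p
    _ ≤ ∫⁻ θ in Ioc (0 : ℝ) 1, B ^ p := by
        refine setLIntegral_mono measurable_const fun θ hθ => ?_
        have := hB θ hθ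
        rwa [eLpNorm_eq_lintegral_rpow_enorm_toReal hq0 hqt, hpr, one_div,
          ENNReal.rpow_inv_le_iff hp0] at this
    _ = B ^ p := by simp

/-- An iterated average in the variable `y` only involves points within `L.length * τ` of `y`. -/
lemma eLpNorm_avgL_le {p : ℝ} (hp : 1 < p) {G : Eu n → Eu n → ℝ}
    (hG : Continuous fun q : Eu n × Eu n => G q.1 q.2) {τ R : ℝ} (hτ : 0 ≤ τ) {B : ℝ≥0∞}
    (hB : ∀ y, ‖y‖ ≤ R → eLpNorm (fun x => G x y) (ENNReal.ofReal p) volume ≤ B)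
    (L : List (Eu n)) (hL : ∀ a ∈ L, ‖a‖ ≤ 1) (y : Eu n) (hy : ‖y‖ + L.length * τ ≤ R) :
    eLpNorm (fun x => avgL τ L (G x) y) (ENNReal.ofReal p) volume ≤ B := by
  induction L generalizing y with
  | nil => simpa [avgL] using hB y (by simpa using hy)
  | cons a L ih =>
    simp only [List.length_cons, Nat.cast_add, Nat.cast_one] at hy
    simp only [avgL, avgOp]
    refine eLpNorm_avg_le hp (Φ := fun x θ => avgL τ L (G x) (y + θ • τ • a)) ?_ fun θ hθ => ?_
    · exact (continuous_avgL_joint hG τ L).comp (by fun_prop : Continuous fun r : Eu n × ℝ =>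
        (r.1, y + r.2 • τ • a))
    · refine ih (fun b hb => hL b (by simp [hb])) _ ?_
      have h1 : ‖θ • τ • a‖ ≤ τ := by
        rw [norm_smul, norm_smul, Real.norm_of_nonneg hθ.1.le, Real.norm_of_nonneg hτ]
        have := hL a (by simp)
        calc θ * (τ * ‖a‖) ≤ 1 * (τ * 1) := by
              gcongr
              exact hθ.2
          _ = τ := by ring
      have := norm_add_le y (θ • τ • a)
      linarith

lemma avgL_zero (L : List (Eu n)) (f : Eu n → ℝ) : avgL 0 L f = f := by
  induction L with
  | nil => rfl
  | cons a L ih => ext x; simp [avgL, avgOp, ih]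

lemma avgL_sum (τ : ℝ) (L : List (Eu n)) {ι : Type*} (S : Finset ι) (c : ι → ℝ)
    {G : ι → Eu n → ℝ} (hG : ∀ i, Continuous (G i)) (y : Eu n) :
    avgL τ L (fun y => ∑ i ∈ S, c i * G i y) y = ∑ i ∈ S, c i * avgL τ L (G i) y := by
  induction L generalizing y with
  | nil => rfl
  | cons a L ih =>
    simp only [avgL, avgOp, ih]
    rw [intervalIntegral.integral_finsetSum]
    · simp only [intervalIntegral.integral_const_mul]
    · intro i _
      have := continuous_avgL (hG i) τ L
      exact Continuous.intervalIntegrable (by fun_prop) _ _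

lemma avgL_dilate (τ : ℝ) (L : List (Eu n)) (f : Eu n → ℝ) (l : ℕ) (x y : Eu n) :
    avgL τ L (fun y => f (x + l • y)) y = avgL (l * τ) L f (x + l • y) := by
  induction L generalizing y with
  | nil => rfl
  | cons a L ih =>
    simp only [avgL, avgOp, ih]
    congr 1; ext θ; congr 1
    simp only [← Nat.cast_smul_eq_nsmul ℝ]
    module

lemma length_stdDirs (m : ℕ) : (stdDirs n m).length = m * n := by
  induction m with
  | zero => simp [stdDirs]
  | succ m ih => simp [stdDirs, ih]; ring

lemma norm_stdDirs (m : ℕ) {a : Eu n} (ha : a ∈ stdDirs n m) : ‖a‖ = 1 := by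
  induction m with
  | zero => simp [stdDirs] at ha
  | succ m ih =>
    rw [stdDirs, List.mem_append, List.mem_map] at ha
    rcases ha with ⟨i, -, rfl⟩ | ha
    · exact norm_stdVec i
    · exact ih ha

/-- The average of `Δ_y^k f(x)` over `y`, where `y` is a sum of `k` independent uniformly distributed
points of the cube `[0,τ]^n`. -/
def gAvg (k : ℕ) (τ : ℝ) (f : Eu n → ℝ) : Eu n → ℝ :=
  fun x => avgL τ (stdDirs n k) (fun y => (deltaOp y)^[k] f x) 0

/-- Averaging `Δ_y^k f(x) = ∑_l ± C(k,l) f(x + l y)` over `y`: the term `l = 0` is `± f`, and the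
term with `l ≥ 1` is a Steklov average of `f` at scale `l τ`. -/
lemma gAvg_eq {f : Eu n → ℝ} (hf : Continuous f) (k : ℕ) (τ : ℝ) (x : Eu n) :
    gAvg k τ f x = ∑ l ∈ Finset.range (k + 1),
      ((-1) ^ (k - l) * (k.choose l : ℝ)) * avgL (l * τ) (stdDirs n k) f x := by
  unfold gAvg
  simp_rw [iterate_deltaOp_eq]
  rw [avgL_sum τ _ _ _ (G := fun (l : ℕ) y => f (x + l • y)) fun l => by fun_prop]
  simp only [avgL_dilate, smul_zero, add_zero]

lemma continuous_gAvg {f : Eu n → ℝ} (hf : Continuous f) (k : ℕ) (τ : ℝ) :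
    Continuous (gAvg k τ f) :=
  (continuous_avgL_joint (G := fun x y => (deltaOp y)^[k] f x) (continuous_iterate_deltaOp hf k) τ
    (stdDirs n k)).comp (by fun_prop : Continuous fun x : Eu n => (x, (0 : Eu n)))

lemma eLpNorm_gAvg_le {p : ℝ} (hp : 1 < p) {f : Eu n → ℝ} (hf : Continuous f) (k : ℕ) {τ T : ℝ}
    (hτ : 0 ≤ τ) (hT : k * n * τ ≤ T) :
    eLpNorm (gAvg k τ f) (ENNReal.ofReal p) volume ≤ smoothnessModulus n k p f T := by
  refine eLpNorm_avgL_le hp (G := fun x y => (deltaOp y)^[k] f x)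
    (continuous_iterate_deltaOp hf k) hτ (R := T) (fun y hy => ?_) _
    (fun a ha => (norm_stdDirs k ha).le) 0 ?_
  · exact le_iSup₂ (f := fun (h : Eu n) (_ : ‖h‖ ≤ T) =>
      eLpNorm ((deltaOp h)^[k] f) (ENNReal.ofReal p) volume) y hy
  · rw [length_stdDirs]
    simpa using hT

/-- First differences of `f` are controlled by those of the averaged `k`-th difference and of
Steklov averages of `f`. -/
lemma setSup_deltaOp_decomp {f : Eu n → ℝ} (hf : Continuous f) (k : ℕ) (τ : ℝ) (u : Eu n)
    (s : ℝ) :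
    setSup (deltaOp u f) s ≤ 2 * setSup (gAvg k τ f) s +
      ∑ l ∈ Finset.range k, (k.choose (l + 1) : ℝ≥0∞) *
        setSup (deltaOp u (avgL (((l + 1 : ℕ) : ℝ) * τ) (stdDirs n k) f)) s := by
  have hg := continuous_gAvg hf k τ
  set A : ℕ → Eu n → ℝ := fun l => avgL (((l + 1 : ℕ) : ℝ) * τ) (stdDirs n k) f with hA
  have hAc : ∀ l, Continuous (A l) := fun l => continuous_avgL hf _ _
  set c : ℕ → ℝ := fun l => (-1) ^ (k - (l + 1)) * (k.choose (l + 1) : ℝ) with hc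
  have e : ∀ x, gAvg k τ f x = ∑ l ∈ Finset.range k, c l * A l x + (-1) ^ k * f x := by
    intro x
    rw [gAvg_eq hf, Finset.sum_range_succ']
    simp [hA, hc, avgL_zero]
  have e2 : ∀ x, ‖deltaOp u f x‖ₑ ≤ ‖deltaOp u (gAvg k τ f) x‖ₑ +
      ‖∑ l ∈ Finset.range k, c l * deltaOp u (A l) x‖ₑ := by
    intro x
    have : (-1) ^ k * deltaOp u f x
        = deltaOp u (gAvg k τ f) x - ∑ l ∈ Finset.range k, c l * deltaOp u (A l) x := by
      simp only [deltaOp, e, mul_sub, Finset.sum_sub_distrib]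
      ring
    have h2 : ‖deltaOp u f x‖ₑ = ‖(-1) ^ k * deltaOp u f x‖ₑ := by
      rw [enorm_mul]; simp [enorm_pow]
    rw [h2, this]
    exact enorm_sub_le
  refine (setSup_le_add (continuous_deltaOp hg u) e2 s).trans ?_
  gcongr
  · exact setSup_deltaOp_le hg u s
  · refine (setSup_sum _ (fun l => (continuous_deltaOp (hAc l) u).const_mul (c l)) s).trans ?_
    refine Finset.sum_le_sum fun l _ => (setSup_const_mul _ _ s).trans (le_of_eq ?_)
    congr 1
    rw [hc]
    simp [enorm_mul, enorm_pow]

end Decomposition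

/-! ### The oscillation estimate -/

section Oscillation

variable {n : ℕ}

/-- The difference `Δ_{σe_i} f` averaged over `m` copies of the basis at the scale
`σ = (l + 1) τ`. -/
def vAvg (m : ℕ) (τ : ℝ) (f : Eu n → ℝ) (l : ℕ) (i : Fin n) : Eu n → ℝ :=
  avgL (((l + 1 : ℕ) : ℝ) * τ) (stdDirs n m) (deltaOp ((((l + 1 : ℕ) : ℝ) * τ) • stdVec i) f)

/-- The sum of the maximal averages of all the functions `vAvg m τ f l i` with `l ≤ m`. -/
def vSum (m : ℕ) (τ : ℝ) (f : Eu n → ℝ) (s : ℝ) : ℝ≥0∞ :=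
  ∑ l ∈ Finset.range (m + 1), ∑ i, maxAvg (vAvg m τ f l i) s

lemma measurable_vSum (m : ℕ) (τ : ℝ) (f : Eu n → ℝ) : Measurable (vSum m τ f) :=
  Finset.measurable_sum _ fun _ _ => Finset.measurable_sum _ fun _ _ => measurable_maxAvg _

/-- The oscillation is bounded by the averaged `k`-th difference and, with the gain `s^{1/n}/τ`, by
averaged first differences; here `k = m + 1`. -/
lemma osc_le_vSum (hn : n ≠ 0) {f : Eu n → ℝ} (hf : Continuous f) (m : ℕ) {τ : ℝ} (hτ : 0 < τ)
    {s : ℝ} (hs : 0 < s) :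
    oscR volume f s ≤ 4 * maxAvg (gAvg (m + 1) τ f) s +
      ENNReal.ofReal (2 * 2 ^ (1 / (n : ℝ)) * 2 ^ (m + 1) / τ) *
        (ENNReal.ofReal (s ^ (1 / (n : ℝ))) * vSum m τ f s) := by
  set r := (2 * s) ^ (1 / (n : ℝ)) with hr
  have hr0 : 0 ≤ r := by positivity
  have key : ∀ u ∈ cube n r, setSup (deltaOp u f) s ≤ 2 * setSup (gAvg (m + 1) τ f) s +
      2 ^ (m + 1) * (ENNReal.ofReal (r / τ) *
        ∑ l ∈ Finset.range (m + 1), ∑ i, setSup (vAvg m τ f l i) s) := by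
    intro u hu
    refine (setSup_deltaOp_decomp hf (m + 1) τ u s).trans ?_
    gcongr
    rw [Finset.mul_sum, Finset.mul_sum]
    refine Finset.sum_le_sum fun l _ => ?_
    have hl : (1 : ℝ) ≤ ((l + 1 : ℕ) : ℝ) := by push_cast; linarith [(Nat.cast_nonneg l : (0:ℝ) ≤ l)]
    have hσ : τ ≤ ((l + 1 : ℕ) : ℝ) * τ := le_mul_of_one_le_left hτ.le hl
    refine mul_le_mul' ?_ ((setSup_deltaOp_cube hf (hτ.trans_le hσ) m hu s).trans ?_)
    · exact_mod_cast Nat.choose_le_two_pow (m + 1) (l + 1)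
    · unfold vAvg
      gcongr
  refine (osc_le hf hn hs key).trans (le_of_eq ?_)
  have e : ENNReal.ofReal (2 * 2 ^ (1 / (n : ℝ)) * 2 ^ (m + 1) / τ) *
      ENNReal.ofReal (s ^ (1 / (n : ℝ))) = 2 * 2 ^ (m + 1) * ENNReal.ofReal (r / τ) := by
    have h2 : (2 * 2 ^ (m + 1) : ℝ≥0∞) = ENNReal.ofReal (2 * 2 ^ (m + 1)) := by
      rw [ENNReal.ofReal_mul (by norm_num), ENNReal.ofReal_pow (by norm_num)]
      simp
    rw [h2, ← ENNReal.ofReal_mul (by positivity), ← ENNReal.ofReal_mul (by positivity), hr,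
      Real.mul_rpow (by norm_num) hs.le]
    congr 1
    ring
  rw [← mul_assoc (ENNReal.ofReal (_ / τ)), e]
  simp only [vSum, maxAvg, ← Finset.mul_sum]
  ring

/-- The right-hand side of `osc_le_vSum` is dominated, on `(0,t]` directly and on `(t,∞)` with the
weight `(t/s)^{k/n}`, by one function whose `L^p` norm is controlled by the modulus of
smoothness. -/
lemma exists_majorant (hn : n ≠ 0) {p : ℝ} (hp : 1 < p) (m : ℕ) (hm : (m : ℝ) / n < 1 / p) :
    ∃ C : ℝ≥0∞, C ≠ ∞ ∧ ∀ f : Eu n → ℝ, Continuous f → Tendsto (maxAvg f) atTop (𝓝 0) →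
      ∀ t : ℝ, 0 < t → ∃ U : ℝ → ℝ≥0∞,
        (∀ s, 0 < s → s ≤ t → oscR volume f s ≤ U s) ∧
        (∀ s, t < s → ENNReal.ofReal (t ^ (((m + 1 : ℕ) : ℝ) / n)) * (oscR volume f s *
          ENNReal.ofReal s ^ (-(((m + 1 : ℕ) : ℝ) / n))) ≤ U s) ∧
        wNorm p 0 U ≤ C * smoothnessModulus n (m + 1) p f (t ^ (1 / (n : ℝ))) := by
  have hn' : (1 : ℝ) ≤ n := by exact_mod_cast Nat.one_le_iff_ne_zero.2 hn
  have hn0 : (n : ℝ) ≠ 0 := by positivity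
  obtain ⟨C₁, hC₁, hardy⟩ := hardy_maxAvg (n := n) hp
  obtain ⟨C₂, hC₂, chain⟩ := sobolev_chain hn hp m hm
  set k : ℕ := m + 1 with hk
  have hk1 : (1 : ℝ) ≤ k := by rw [hk]; push_cast; linarith [(Nat.cast_nonneg m : (0:ℝ) ≤ m)]
  -- With `τ = t^{1/n} / M` both the increments of size at most `k n τ` in `gAvg` and the `k`-fold
  -- mixed differences with steps at most `k τ` stay within `t^{1/n}`.
  set M : ℝ := k ^ 2 * n with hM
  have hM0 : 0 < M := by positivity
  set c : ℝ := 2 * 2 ^ (1 / (n : ℝ)) * 2 ^ k with hc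
  have hc0 : 0 < c := by positivity
  refine ⟨4 * C₁ + ENNReal.ofReal (c * M ^ k) * (k * (n * (C₂ * 2 ^ k))), ?_, ?_⟩
  · finiteness
  intro f hf hf0 t ht
  set T : ℝ := t ^ (1 / (n : ℝ)) with hT
  have hT0 : 0 < T := by positivity
  set τ : ℝ := T / M with hτ
  have hτ0 : 0 < τ := by positivity
  set W := smoothnessModulus n k p f T with hW
  have hTτ : T = k ^ 2 * n * τ := by rw [hτ]; field_simp; rw [hM]
  set g := gAvg k τ f with hg
  have htk : t ^ ((k : ℝ) / n) = T ^ k := by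
    rw [hT, ← Real.rpow_natCast, ← Real.rpow_mul ht.le]
    congr 1
    ring
  have hexp : (k : ℝ) / n = 1 / n + m / n := by rw [hk]; push_cast; ring
  have hG : wNorm p (m / n) (vSum m τ f)
      ≤ k * (n * (C₂ * ENNReal.ofReal (1 / τ) ^ m * (2 ^ k * W))) := by
    refine (wNorm_sum_le hp (Finset.range (m + 1)) (F := fun l s => ∑ i, maxAvg (vAvg m τ f l i) s)
      fun l => Finset.measurable_sum _ fun _ _ => measurable_maxAvg _).trans ?_
    have : ∀ l ∈ Finset.range (m + 1), wNorm p (m / n) (fun s => ∑ i, maxAvg (vAvg m τ f l i) s)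
        ≤ n * (C₂ * ENNReal.ofReal (1 / τ) ^ m * (2 ^ k * W)) := by
      intro l hl
      have hl1 : (1 : ℝ) ≤ ((l + 1 : ℕ) : ℝ) := by
        push_cast; linarith [(Nat.cast_nonneg l : (0:ℝ) ≤ l)]
      have hl2 : ((l + 1 : ℕ) : ℝ) ≤ k := by
        rw [Finset.mem_range] at hl
        exact_mod_cast hl
      set σ : ℝ := ((l + 1 : ℕ) : ℝ) * τ with hσ
      have hσ0 : 0 < σ := by positivity
      have hτσ : τ ≤ σ := le_mul_of_one_le_left hτ0.le hl1
      refine (wNorm_sum_le hp Finset.univ fun i => measurable_maxAvg _).trans ?_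
      have hi : ∀ i ∈ (Finset.univ : Finset (Fin n)), wNorm p (m / n) (maxAvg (vAvg m τ f l i))
          ≤ C₂ * ENNReal.ofReal (1 / τ) ^ m * (2 ^ k * W) := by
        intro i _
        refine (chain σ hσ0 (deltaOp (σ • stdVec i) f) (continuous_deltaOp hf _)
          (tendsto_maxAvg_of_le (c := 2) (by simp) (setSup_deltaOp_le hf _) hf0) (2 ^ k * W)
          fun I hI => ?_).trans ?_
        · have hlen : ((I ++ [i]).map fun i => σ • stdVec i).length = k := by simp [hI, hk]
          have h := eLpNorm_mixD_le hp hf ((I ++ [i]).map fun i => (σ • stdVec i : Eu n))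
            (ρ := σ) (T := T) ?_ ?_
          · rwa [hlen, List.map_append, List.map_cons, List.map_nil, mixD_concat] at h
          · intro a ha
            obtain ⟨j, -, rfl⟩ := List.mem_map.1 ha
            rw [norm_smul, norm_stdVec, mul_one, Real.norm_of_nonneg hσ0.le]
          · rw [hlen, hσ, hTτ]
            calc (k : ℝ) * (((l + 1 : ℕ) : ℝ) * τ) ≤ k * (k * τ) := by gcongr
              _ = k ^ 2 * 1 * τ := by ring
              _ ≤ k ^ 2 * n * τ := by gcongr
        · gcongr
      refine (Finset.sum_le_sum hi).trans (le_of_eq ?_)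
      simp
    refine (Finset.sum_le_sum this).trans (le_of_eq ?_)
    simp [hk]
  have hgW : eLpNorm g (ENNReal.ofReal p) volume ≤ W := by
    refine eLpNorm_gAvg_le hp hf k hτ0.le ?_
    rw [hTτ]
    gcongr
    nlinarith
  have hvm := measurable_vSum m τ f
  refine ⟨fun s => 4 * maxAvg g s + ENNReal.ofReal (c / τ * T ^ k) *
    (ENNReal.ofReal (s ^ (-((m : ℝ) / n))) * vSum m τ f s), fun s hs hst => ?_, fun s hts => ?_, ?_⟩
  · refine (osc_le_vSum hn hf m hτ0 hs).trans ?_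
    have e : ENNReal.ofReal (c / τ * T ^ k) *
        (ENNReal.ofReal (s ^ (-((m : ℝ) / n))) * vSum m τ f s) = ENNReal.ofReal (c / τ) *
          (ENNReal.ofReal (T ^ k * s ^ (-((m : ℝ) / n))) * vSum m τ f s) := by
      rw [ENNReal.ofReal_mul (by positivity), ENNReal.ofReal_mul (by positivity)]
      ring
    dsimp only
    rw [e, ← htk]
    gcongr
    calc s ^ (1 / (n : ℝ)) = s ^ ((k : ℝ) / n) * s ^ (-((m : ℝ) / n)) := by
          rw [← Real.rpow_add hs, hexp]
          congr 1
          ring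
      _ ≤ _ := by gcongr
  · have hs : 0 < s := ht.trans hts
    rw [htk, ENNReal.ofReal_rpow_of_pos hs]
    have h1 : T ^ k * s ^ (-((k : ℝ) / n)) ≤ 1 := by
      rw [← htk, Real.rpow_neg hs.le, ← div_eq_mul_inv]
      refine div_le_one_of_le₀ ?_ (by positivity)
      gcongr
    have h2 : s ^ (-((k : ℝ) / n)) * s ^ (1 / (n : ℝ)) = s ^ (-((m : ℝ) / n)) := by
      rw [← Real.rpow_add hs, hexp]
      congr 1
      ring
    calc ENNReal.ofReal (T ^ k) * (oscR volume f s * ENNReal.ofReal (s ^ (-((k : ℝ) / n))))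
        ≤ ENNReal.ofReal (T ^ k) * ((4 * maxAvg g s + ENNReal.ofReal (c / τ) *
          (ENNReal.ofReal (s ^ (1 / (n : ℝ))) * vSum m τ f s)) *
            ENNReal.ofReal (s ^ (-((k : ℝ) / n)))) := by
          gcongr
          exact osc_le_vSum hn hf m hτ0 hs
      _ = ENNReal.ofReal (T ^ k * s ^ (-((k : ℝ) / n))) * (4 * maxAvg g s) +
          ENNReal.ofReal (c / τ * T ^ k) *
            (ENNReal.ofReal (s ^ (-((m : ℝ) / n))) * vSum m τ f s) := by
          rw [← h2, ENNReal.ofReal_mul (by positivity), ENNReal.ofReal_mul (by positivity),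
            ENNReal.ofReal_mul (by positivity)]
          ring
      _ ≤ _ := by
          refine add_le_add_left (mul_le_of_le_one_left zero_le ?_) _
          rwa [ENNReal.ofReal_le_one]
  · refine (wNorm_add_le hp (by fun_prop) ?_).trans ?_
    · have : Measurable fun s : ℝ => s ^ (-((m : ℝ) / n)) := by fun_prop
      fun_prop
    rw [wNorm_const_mul hp (by fun_prop), wNorm_const_mul hp (by fun_prop), wNorm_shift,
      zero_sub, neg_neg, add_mul]
    gcongr ?_ + ?_
    · rw [mul_assoc]
      gcongr
      exact (hardy g (continuous_gAvg hf k τ)).trans (by gcongr)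
    · have e : ENNReal.ofReal (c / τ * T ^ k) * ENNReal.ofReal (1 / τ) ^ m
          = ENNReal.ofReal (c * M ^ k) := by
        rw [← ENNReal.ofReal_pow (by positivity), ← ENNReal.ofReal_mul (by positivity)]
        congr 1
        have hTM : T = M * τ := by rw [hτ]; field_simp
        have hpow : τ ^ m * τ⁻¹ ^ m = 1 := by rw [← mul_pow, mul_inv_cancel₀ hτ0.ne', one_pow]
        calc c / τ * T ^ k * (1 / τ) ^ m = c * M ^ k * (τ ^ m * τ⁻¹ ^ m) := by
              rw [hTM, hk, mul_pow, pow_succ τ, one_div]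
              field_simp
          _ = c * M ^ k := by rw [hpow, mul_one]
      calc _ ≤ ENNReal.ofReal (c / τ * T ^ k) *
            (k * (n * (C₂ * ENNReal.ofReal (1 / τ) ^ m * (2 ^ k * W)))) := by gcongr
        _ = (ENNReal.ofReal (c / τ * T ^ k) * ENNReal.ofReal (1 / τ) ^ m) *
            (k * (n * (C₂ * 2 ^ k))) * W := by ring
        _ ≤ _ := by rw [e]

lemma maxAvg_le_dstarR {f : Eu n → ℝ} (hf : Continuous f) (t : ℝ) :
    maxAvg f t ≤ dstarR volume (fun x => ‖iteratedFDeriv ℝ 0 f x‖) t := by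
  unfold maxAvg dstarR
  gcongr
  refine (setSup_le_rearr hf t).trans (le_of_eq ?_)
  unfold rearrR
  simp only [norm_iteratedFDeriv_zero, abs_norm, ofReal_norm]

end Oscillation

/-! ### The reverse Marchaud inequality -/

/-- Corollary 1.5: a reverse Marchaud-type inequality. -/
theorem reverse_marchaud
    (n : ℕ) (hn : 2 ≤ n) (p : ℝ) (hp : 1 < p) (hpn : p < n)
    (k : ℕ) (hk : 2 ≤ k) (hkn : (k : ℝ) < n / p + 1) :
    ∃ C : ℝ, 0 < C ∧
      ∀ f : EuclideanSpace ℝ (Fin n) → ℝ, ContDiff ℝ ((k : ℕ∞) - 1) f →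
        (∀ j < k, (∀ t > 0,
            dstarR volume (fun x => ‖iteratedFDeriv ℝ j f x‖) t ≠ ∞) ∧
          Tendsto (dstarR volume (fun x => ‖iteratedFDeriv ℝ j f x‖)) atTop (𝓝 0)) →
        ∀ t > 0,
          (∫⁻ s in Ioc (0 : ℝ) t, oscR volume f s ^ p) ^ (1 / p) +
            ENNReal.ofReal (t ^ ((k : ℝ) / n)) *
              (∫⁻ s in Ioi t, oscR volume f s ^ p *
                ENNReal.ofReal s ^ (-((k : ℝ) * p / n))) ^ (1 / p)
          ≤ ENNReal.ofReal C * smoothnessModulus n k p f (t ^ (1 / (n : ℝ))) := by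
  have hn0 : n ≠ 0 := by omega
  have hnr : (0 : ℝ) < n := by positivity
  have hp0 : 0 < p := by linarith
  obtain ⟨m, rfl⟩ : ∃ m, k = m + 1 := ⟨k - 1, by omega⟩
  have hm : (m : ℝ) / n < 1 / p := by
    push_cast at hkn
    have : (m : ℝ) < n / p := by linarith
    rw [lt_div_iff₀ hp0] at this
    rw [div_lt_div_iff₀ hnr hp0]
    linarith
  obtain ⟨C, hC, h⟩ := exists_majorant hn0 hp m hm
  -- The `+ 1` makes the constant positive.
  refine ⟨2 * C.toReal + 1, by positivity, fun f hf hj t ht => ?_⟩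
  have hfc : Continuous f := hf.continuous
  have hf0 : Tendsto (maxAvg f) atTop (𝓝 0) :=
    tendsto_of_tendsto_of_tendsto_of_le_of_le tendsto_const_nhds (hj 0 (by omega)).2
      (fun _ => zero_le) (maxAvg_le_dstarR hfc)
  obtain ⟨U, hU1, hU2, hU⟩ := h f hfc hf0 t ht
  have hw : wNorm p 0 U = (∫⁻ s in Ioi (0 : ℝ), U s ^ p) ^ (1 / p) := by
    simp [wNorm]
  set W := smoothnessModulus n (m + 1) p f (t ^ (1 / (n : ℝ)))
  rw [hw] at hU
  have A : (∫⁻ s in Ioc (0 : ℝ) t, oscR volume f s ^ p) ^ (1 / p) ≤ C * W := by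
    refine le_trans ?_ hU
    gcongr ?_ ^ _
    refine le_trans ?_ (lintegral_mono_set (Ioc_subset_Ioi_self : Ioc (0 : ℝ) t ⊆ Ioi 0))
    refine setLIntegral_mono' measurableSet_Ioc fun s hs => ?_
    gcongr
    exact hU1 s hs.1 hs.2
  have B : ENNReal.ofReal (t ^ (((m + 1 : ℕ) : ℝ) / n)) *
      (∫⁻ s in Ioi t, oscR volume f s ^ p *
        ENNReal.ofReal s ^ (-(((m + 1 : ℕ) : ℝ) * p / n))) ^ (1 / p) ≤ C * W := by
    refine le_trans ?_ hU
    set a := ENNReal.ofReal (t ^ (((m + 1 : ℕ) : ℝ) / n)) with ha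
    have ea : a = (a ^ p) ^ (1 / p) := by
      rw [← ENNReal.rpow_mul, mul_one_div_cancel hp0.ne', ENNReal.rpow_one]
    rw [ea, ← ENNReal.mul_rpow_of_nonneg _ _ (by positivity),
      ← lintegral_const_mul' _ _ (ENNReal.rpow_ne_top_of_nonneg hp0.le ENNReal.ofReal_ne_top)]
    gcongr ?_ ^ _
    refine le_trans ?_ (lintegral_mono_set (Ioi_subset_Ioi ht.le))
    refine setLIntegral_mono' measurableSet_Ioi fun s (hs : t < s) => ?_
    refine le_trans (le_of_eq ?_) (ENNReal.rpow_le_rpow (hU2 s hs) hp0.le)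
    rw [ENNReal.mul_rpow_of_nonneg _ _ hp0.le, ENNReal.mul_rpow_of_nonneg _ _ hp0.le,
      ← ENNReal.rpow_mul]
    congr 3
    ring
  calc _ ≤ C * W + C * W := add_le_add A B
    _ = ENNReal.ofReal (2 * C.toReal) * W := by
      rw [ENNReal.ofReal_mul (by norm_num), ENNReal.ofReal_toReal hC]
      simp
      ring
    _ ≤ _ := by
      gcongr
      linarith

end
end

section
/- Let N0, N1 be functionals assigning to each measurable function u : (0,∞) → [0,∞] a value in [0,∞], each positively homogeneous (N_i(c·u) = c·N_i(u) for c > 0) and monotone (u ≤ v a.e. implies N_i(u) ≤ N_i(v)), and assume there is d > 0 such that N_1(s ↦ u(s/2)) ≤ d·N_1(u) for every non-increasing u : (0,∞) → [0,∞]. Set φ_i(t) = N_i(χ_{(0,t)}), assume 0 < φ_i(t) < ∞ for all t > 0, and set σ = φ0/φ1. If there is c > 0 such that N_0(s ↦ χ_{(0,t)}(s)/φ1(s)) ≤ c·σ(t) for all t > 0, then there is c' > 0 such that N_0(s ↦ χ_{(0,t)}(s)·u(s/2)) ≤ c'·σ(t)·N_1(u) for every t > 0 and every non-increasing u : (0,∞)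 → [0,∞]. -/
/-!
A non-increasing `u` satisfies `u (s / 2) χ_{(0,s)}(r) ≤ u (r / 2)` for all `r > 0`. Applying `N₁`
and the dilation bound gives the pointwise estimate `u (s / 2) ≤ d N₁(u) / φ₁ s`
(`le_of_antitone`). Multiplying by `χ_{(0,t)}` and applying `N₀`, the constant `d N₁(u)` comes out
by homogeneity and the hypothesis on `χ_{(0,t)} / φ₁` finishes, with `c' = d c`. Homogeneity is
only given for factors in `(0, ∞)`: an infinite value of `u` is approximated from below, the factor
`0` is covered by `N₀ 0 = 0` (`map_zero_of_hom`), and for `N₁ u = ∞` the right-hand side is `∞`.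
-/

open MeasureTheory Set Filter Topology
open scoped ENNReal

noncomputable section

/-- Homogeneity with factor `2` forces a functional to vanish at zero, once its value there is
finite. -/
lemma map_zero_of_hom (N : (ℝ → ℝ≥0∞) → ℝ≥0∞)
    (hom : ∀ c : ℝ, 0 < c → ∀ u : ℝ → ℝ≥0∞,
      N (fun s => ENNReal.ofReal c * u s) = ENNReal.ofReal c * N u)
    (hfin : N (fun _ => 0) ≠ ∞) : N (fun _ => 0) = 0 := by
  have h2 := hom 2 two_pos (fun _ => 0)
  simp only [mul_zero, ENNReal.ofReal_ofNat] at h2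
  have h3 := congrArg ENNReal.toReal h2
  rw [ENNReal.toReal_mul, ENNReal.toReal_ofNat] at h3
  exact ((ENNReal.toReal_eq_zero_iff _).1 (by linarith)).resolve_right hfin

/-- A non-increasing function is bounded at each point `s` by its norm divided by the fundamental
function `N χ_{(0,s)}`. -/
lemma le_of_antitone (N : (ℝ → ℝ≥0∞) → ℝ≥0∞)
    (hom : ∀ c : ℝ, 0 < c → ∀ u : ℝ → ℝ≥0∞,
      N (fun s => ENNReal.ofReal c * u s) = ENNReal.ofReal c * N u)
    (mono : ∀ u v : ℝ → ℝ≥0∞,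
      (∀ᵐ s ∂(volume.restrict (Ioi (0 : ℝ))), u s ≤ v s) → N u ≤ N v)
    (v : ℝ → ℝ≥0∞) (hv : AntitoneOn v (Ioi 0)) (s : ℝ) (hs : 0 < s)
    (h0 : N ((Ioo (0 : ℝ) s).indicator fun _ => 1) ≠ 0)
    (ht : N ((Ioo (0 : ℝ) s).indicator fun _ => 1) ≠ ∞) :
    v s ≤ N v * (N ((Ioo (0 : ℝ) s).indicator fun _ => 1))⁻¹ := by
  refine ENNReal.le_of_forall_nnreal_lt fun r hr => ?_
  rcases eq_or_ne r 0 with rfl | hr0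
  · simp
  rw [← div_eq_mul_inv, ENNReal.le_div_iff_mul_le (Or.inl h0) (Or.inl ht),
    ← ENNReal.ofReal_coe_nnreal, ← hom r (by positivity)]
  refine mono _ _ (Eventually.of_forall fun x => ?_)
  by_cases hx : x ∈ Ioo 0 s
  · simpa [hx] using hr.le.trans (hv hx.1 hs hx.2.le)
  · simp [hx]

/-- Lemma 3.2, first part: a sufficient condition for the estimate
`N₀(χ_{(0,t)}(s) u(s/2)) ≲ σ(t) N₁(u)` for non-increasing `u`. -/
theorem sufficient_condition_first
    (N₀ N₁ : (ℝ → ℝ≥0∞) → ℝ≥0∞)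
    (hom₀ : ∀ c : ℝ, 0 < c → ∀ u : ℝ → ℝ≥0∞,
      N₀ (fun s => ENNReal.ofReal c * u s) = ENNReal.ofReal c * N₀ u)
    (hom₁ : ∀ c : ℝ, 0 < c → ∀ u : ℝ → ℝ≥0∞,
      N₁ (fun s => ENNReal.ofReal c * u s) = ENNReal.ofReal c * N₁ u)
    (mono₀ : ∀ u v : ℝ → ℝ≥0∞,
      (∀ᵐ s ∂(volume.restrict (Ioi (0 : ℝ))), u s ≤ v s) → N₀ u ≤ N₀ v)
    (mono₁ : ∀ u v : ℝ → ℝ≥0∞,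
      (∀ᵐ s ∂(volume.restrict (Ioi (0 : ℝ))), u s ≤ v s) → N₁ u ≤ N₁ v)
    (d : ℝ) (hd : 0 < d)
    (hdil : ∀ u : ℝ → ℝ≥0∞, AntitoneOn u (Ioi 0) →
      N₁ (fun s => u (s / 2)) ≤ ENNReal.ofReal d * N₁ u)
    (φ₀ φ₁ : ℝ → ℝ≥0∞)
    (hφ₀def : ∀ t : ℝ, φ₀ t = N₀ ((Ioo (0 : ℝ) t).indicator fun _ => 1))
    (hφ₁def : ∀ t : ℝ, φ₁ t = N₁ ((Ioo (0 : ℝ) t).indicator fun _ => 1))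
    (hφ₀ : ∀ t > 0, φ₀ t ≠ 0 ∧ φ₀ t ≠ ∞)
    (hφ₁ : ∀ t > 0, φ₁ t ≠ 0 ∧ φ₁ t ≠ ∞)
    (c : ℝ) (hc : 0 < c)
    (h : ∀ t > 0, N₀ ((Ioo (0 : ℝ) t).indicator fun s => (φ₁ s)⁻¹)
      ≤ ENNReal.ofReal c * (φ₀ t / φ₁ t)) :
    ∃ c' : ℝ, 0 < c' ∧ ∀ t > 0, ∀ u : ℝ → ℝ≥0∞, AntitoneOn u (Ioi 0) →
      N₀ ((Ioo (0 : ℝ) t).indicator fun s => u (s / 2))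
        ≤ ENNReal.ofReal c' * ((φ₀ t / φ₁ t) * N₁ u) := by
  have hzero : N₀ (fun _ => 0) = 0 := by
    refine map_zero_of_hom N₀ hom₀ (ne_top_of_le_ne_top (hφ₀ 1 one_pos).2 ?_)
    rw [hφ₀def]
    exact mono₀ _ _ (Eventually.of_forall fun _ => zero_le)
  have hom₀' : ∀ a : ℝ≥0∞, a ≠ ∞ → ∀ u : ℝ → ℝ≥0∞, N₀ (fun s => a * u s) = a * N₀ u := by
    intro a ha u
    rcases eq_or_ne a 0 with rfl | ha0
    · simpa using hzero
    · simpa [ENNReal.ofReal_toReal ha] using hom₀ a.toReal (ENNReal.toReal_pos ha0 ha) u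
  refine ⟨d * c, mul_pos hd hc, fun t ht u hu => ?_⟩
  rcases eq_or_ne (N₁ u) ∞ with htop | hfin
  · have hσ : φ₀ t / φ₁ t ≠ 0 := ENNReal.div_ne_zero.2 ⟨(hφ₀ t ht).1, (hφ₁ t ht).2⟩
    have hdc : ENNReal.ofReal (d * c) ≠ 0 := by simpa using mul_pos hd hc
    rw [htop, ENNReal.mul_top hσ, ENNReal.mul_top hdc]
    exact le_top
  have hpt : ∀ s : ℝ, 0 < s → u (s / 2) ≤ ENNReal.ofReal d * N₁ u * (φ₁ s)⁻¹ := by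
    intro s hs
    have hv : AntitoneOn (fun s => u (s / 2)) (Ioi 0) := fun x hx y hy hxy =>
      hu (mem_Ioi.2 (half_pos hx)) (mem_Ioi.2 (half_pos hy)) (by linarith)
    obtain ⟨h0, h1⟩ := hφ₁ s hs
    rw [hφ₁def] at h0 h1 ⊢
    exact (le_of_antitone N₁ hom₁ mono₁ _ hv s hs h0 h1).trans (by gcongr; exact hdil u hu)
  calc N₀ ((Ioo (0 : ℝ) t).indicator fun s => u (s / 2))
      ≤ N₀ (fun s => ENNReal.ofReal d * N₁ u *
          (Ioo (0 : ℝ) t).indicator (fun s => (φ₁ s)⁻¹) s) := by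
        refine mono₀ _ _ (Eventually.of_forall fun s => ?_)
        by_cases hs : s ∈ Ioo 0 t
        · simpa [hs] using hpt s hs.1
        · simp [hs]
    _ = ENNReal.ofReal d * N₁ u * N₀ ((Ioo (0 : ℝ) t).indicator fun s => (φ₁ s)⁻¹) :=
        hom₀' _ (ENNReal.mul_ne_top ENNReal.ofReal_ne_top hfin) _
    _ ≤ ENNReal.ofReal d * N₁ u * (ENNReal.ofReal c * (φ₀ t / φ₁ t)) := by
        gcongr
        exact h t ht
    _ = ENNReal.ofReal (d * c) * ((φ₀ t / φ₁ t) * N₁ u) := by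
        rw [ENNReal.ofReal_mul hd.le]
        ring

end
end

section
/- Let N0, N1 be functionals assigning to each measurable function u : (0,∞) → [0,∞] a value in [0,∞], each positively homogeneous (N_i(c·u) = c·N_i(u) for c > 0) and monotone (u ≤ v a.e. implies N_i(u) ≤ N_i(v)), and assume there is d > 0 such that N_0(s ↦ u(s/2)) ≤ d·N_0(u) for every non-increasing u : (0,∞) → [0,∞]. Set φ_i(t) = N_i(χ_{(0,t)}), assume 0 < φ_i(t) < ∞ for all t > 0, and set σ = φ0/φ1. If there is c > 0 such that σ(t)·N_1(s ↦ χ_{(t,∞)}(s)/φ0(s)) ≤ c for all t > 0, then there is c' > 0 such that σ(t)·N_1(s ↦ χ_{(t,∞)}(s)·u(s/2)) ≤ c'·N_0(u) for every t > 0 and every non-increasing u : (0,∞) → [0,∞]. -/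
/-!
Testing `N₀` on `u(r) χ_{(0,r)} ≤ u` gives `u(r) φ₀(r) ≤ N₀ u` for non-increasing `u`, and the
dilation hypothesis applied to `χ_{(0,s/2)}` gives `φ₀(s) ≤ d φ₀(s/2)`. Together they yield the
pointwise bound `u(s/2) ≤ d N₀(u) / φ₀(s)`, to which the monotone homogeneous functional `N₁` is
applied; the hypothesis on `N₁(χ_{(t,∞)} / φ₀)` then gives the claim with constant `d c`.
Homogeneity is only available for finite positive scalars, so `N₀ u` is replaced throughout by an
arbitrary real number `K > 0` above it, and `u(r)` by an arbitrary positive real number below it.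
-/

open MeasureTheory Set Filter Topology
open scoped ENNReal

noncomputable section

/-- Lemma 3.2, second part: a sufficient condition for the estimate
`σ(t) N₁(χ_{(t,∞)}(s) u(s/2)) ≲ N₀(u)` for non-increasing `u`. -/
theorem sufficient_condition_second
    (N₀ N₁ : (ℝ → ℝ≥0∞) → ℝ≥0∞)
    (hom₀ : ∀ c : ℝ, 0 < c → ∀ u : ℝ → ℝ≥0∞,
      N₀ (fun s => ENNReal.ofReal c * u s) = ENNReal.ofReal c * N₀ u)
    (hom₁ : ∀ c : ℝ, 0 < c → ∀ u : ℝ → ℝ≥0∞,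
      N₁ (fun s => ENNReal.ofReal c * u s) = ENNReal.ofReal c * N₁ u)
    (mono₀ : ∀ u v : ℝ → ℝ≥0∞,
      (∀ᵐ s ∂(volume.restrict (Ioi (0 : ℝ))), u s ≤ v s) → N₀ u ≤ N₀ v)
    (mono₁ : ∀ u v : ℝ → ℝ≥0∞,
      (∀ᵐ s ∂(volume.restrict (Ioi (0 : ℝ))), u s ≤ v s) → N₁ u ≤ N₁ v)
    (d : ℝ) (hd : 0 < d)
    (hdil : ∀ u : ℝ → ℝ≥0∞, AntitoneOn u (Ioi 0) →
      N₀ (fun s => u (s / 2)) ≤ ENNReal.ofReal d * N₀ u)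
    (φ₀ φ₁ : ℝ → ℝ≥0∞)
    (hφ₀def : ∀ t : ℝ, φ₀ t = N₀ ((Ioo (0 : ℝ) t).indicator fun _ => 1))
    (hφ₁def : ∀ t : ℝ, φ₁ t = N₁ ((Ioo (0 : ℝ) t).indicator fun _ => 1))
    (hφ₀ : ∀ t > 0, φ₀ t ≠ 0 ∧ φ₀ t ≠ ∞)
    (hφ₁ : ∀ t > 0, φ₁ t ≠ 0 ∧ φ₁ t ≠ ∞)
    (c : ℝ) (hc : 0 < c)
    (h : ∀ t > 0, (φ₀ t / φ₁ t) * N₁ ((Ioi t).indicator fun s => (φ₀ s)⁻¹)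
      ≤ ENNReal.ofReal c) :
    ∃ c' : ℝ, 0 < c' ∧ ∀ t > 0, ∀ u : ℝ → ℝ≥0∞, AntitoneOn u (Ioi 0) →
      (φ₀ t / φ₁ t) * N₁ ((Ioi t).indicator fun s => u (s / 2))
        ≤ ENNReal.ofReal c' * N₀ u := by
  have hdouble : ∀ s > 0, φ₀ s ≤ ENNReal.ofReal d * φ₀ (s / 2) := by
    intro s hs
    have hanti : AntitoneOn ((Ioo (0 : ℝ) (s / 2)).indicator fun _ => (1 : ℝ≥0∞)) (Ioi 0) := by
      intro a ha b hb hab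
      by_cases hbs : b ∈ Ioo (0 : ℝ) (s / 2)
      · rw [indicator_of_mem hbs,
          indicator_of_mem (show a ∈ Ioo (0 : ℝ) (s / 2) from ⟨ha, hab.trans_lt hbs.2⟩)]
      · simp [indicator_of_notMem hbs]
    rw [hφ₀def s, hφ₀def (s / 2)]
    refine le_trans (mono₀ _ _ (Eventually.of_forall fun r => ?_)) (hdil _ hanti)
    by_cases hr : r ∈ Ioo (0 : ℝ) s
    · rw [indicator_of_mem hr, indicator_of_mem]
      exact ⟨by linarith [hr.1], by linarith [hr.2]⟩
    · simp [indicator_of_notMem hr]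
  have hpoint : ∀ u : ℝ → ℝ≥0∞, AntitoneOn u (Ioi 0) → ∀ K : ℝ, N₀ u ≤ ENNReal.ofReal K →
      ∀ s > 0, u (s / 2) ≤ ENNReal.ofReal (d * K) * (φ₀ s)⁻¹ := by
    intro u hu K hK s hs
    refine ENNReal.le_of_forall_nnreal_lt fun q hq => ?_
    rcases eq_or_ne q 0 with rfl | hq0
    · simp
    have hqpos : (0 : ℝ) < q := by positivity
    have htest : (q : ℝ≥0∞) * φ₀ (s / 2) ≤ N₀ u := by
      have hh := hom₀ q hqpos ((Ioo (0 : ℝ) (s / 2)).indicator fun _ => 1)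
      rw [ENNReal.ofReal_coe_nnreal] at hh
      rw [hφ₀def, ← hh]
      refine mono₀ _ _ ((ae_restrict_iff' measurableSet_Ioi).2 (Eventually.of_forall ?_))
      intro r hr
      by_cases hrs : r ∈ Ioo (0 : ℝ) (s / 2)
      · rw [indicator_of_mem hrs, mul_one]
        exact hq.le.trans (hu hr (half_pos hs) hrs.2.le)
      · simp [hrs]
    rw [← div_eq_mul_inv, ENNReal.le_div_iff_mul_le (Or.inl (hφ₀ s hs).1) (Or.inl (hφ₀ s hs).2),
      ENNReal.ofReal_mul hd.le]
    calc (q : ℝ≥0∞) * φ₀ s ≤ q * (ENNReal.ofReal d * φ₀ (s / 2)) := by gcongr; exact hdouble s hs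
      _ = ENNReal.ofReal d * (q * φ₀ (s / 2)) := by ring
      _ ≤ ENNReal.ofReal d * ENNReal.ofReal K := by gcongr; exact htest.trans hK
  refine ⟨d * c, by positivity, fun t ht u hu => ?_⟩
  have hbound : ∀ K : ℝ, 0 < K → N₀ u ≤ ENNReal.ofReal K →
      (φ₀ t / φ₁ t) * N₁ ((Ioi t).indicator fun s => u (s / 2))
        ≤ ENNReal.ofReal (d * c) * ENNReal.ofReal K := by
    intro K hKpos hK
    calc (φ₀ t / φ₁ t) * N₁ ((Ioi t).indicator fun s => u (s / 2))
        ≤ (φ₀ t / φ₁ t) * N₁ (fun s => ENNReal.ofReal (d * K) *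
            (Ioi t).indicator (fun s => (φ₀ s)⁻¹) s) := by
          gcongr
          refine mono₁ _ _ (Eventually.of_forall fun s => ?_)
          by_cases hst : s ∈ Ioi t
          · rw [indicator_of_mem hst, indicator_of_mem hst]
            exact hpoint u hu K hK s (ht.trans hst)
          · simp [indicator_of_notMem hst]
      _ = ENNReal.ofReal (d * K) *
            ((φ₀ t / φ₁ t) * N₁ ((Ioi t).indicator fun s => (φ₀ s)⁻¹)) := by
          rw [hom₁ _ (by positivity)]; ring
      _ ≤ ENNReal.ofReal (d * K) * ENNReal.ofReal c := by gcongr; exact h t ht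
      _ = ENNReal.ofReal (d * c) * ENNReal.ofReal K := by
          rw [ENNReal.ofReal_mul hd.le, ENNReal.ofReal_mul hd.le]; ring
  have hdc : ENNReal.ofReal (d * c) ≠ 0 := (ENNReal.ofReal_pos.2 (by positivity)).ne'
  rw [mul_comm (ENNReal.ofReal (d * c)), ← ENNReal.div_le_iff hdc ENNReal.ofReal_ne_top]
  refine le_of_forall_gt_imp_ge_of_dense fun a ha => ?_
  rcases eq_or_ne a ∞ with rfl | ha_top
  · exact le_top
  rw [ENNReal.div_le_iff hdc ENNReal.ofReal_ne_top, mul_comm a, ← ENNReal.ofReal_toReal ha_top]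
  refine hbound _ (ENNReal.toReal_pos (ne_bot_of_gt ha) ha_top) ?_
  rw [ENNReal.ofReal_toReal ha_top]
  exact ha.le

end
end

section
/- Let p0, p1 ∈ (0,∞) and let w0, w1 be weights on (0,∞) with φ_i(t) = (∫_0^t w_i(s) ds)^{1/p_i} ∈ (0,∞) for all t > 0 and i = 0,1; set σ = φ0/φ1. Assume φ1 satisfies the Δ2-condition, i.e., there is C > 0 with φ1(2t) ≤ C·φ1(t) for all t > 0. Then the following two conditions are equivalent: (a) there is C1 > 0 such that σ(t)·‖χ_{(t,∞)}/φ0‖_{Λ^{p1}(w1)} ≤ C1 for all t > 0, where χ_{(t,∞)}/φ0 denotes the function s ↦ χ_{(t,∞)}(s)/φ0(s) on (0,∞) and its Λ-quasinorm is computed via its non-increasing rearrangement with respect to Lebesgue measure; (b) there is C2 > 0 such that σ(t)·(∫_t^∞ φ0(s)^{−p1} w1(s) ds)^{1/p1} ≤ C2 for all t > 0. -/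
/-! Put `h = φ₀ ^ (-p₁)` and `W(t) = ∫_0^t w₁ = φ₁(t) ^ p₁`, so that `σ ^ p₁ = 1 / (h W)`. After
raising both conditions to the power `p₁` (`forall_mul_rpow_bound_iff`), they compare
`A(t) = ∫_0^∞ (g*) ^ p₁ w₁`, where `g = χ_{(t,∞)} / φ₀`, with `B(t) = ∫_t^∞ h w₁`, up to multiples
of `h(t) W(t)`.

Since `φ₀` is non-decreasing, `g*(s) ≤ 1 / φ₀(t + s)` (`rearrL_le`), and `g*(s) ≥ 1 / φ₀(x)` whenever
`x > t + s` (`le_rearrL`); these two bounds make the continuity of `φ₀` irrelevant. The first gives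
`A(t) ≤ h(t) W(t) + B(t)`, by splitting the integral at `t`. For the converse the point is that `φ₀`
itself need not be doubling, so the doubling has to be moved to `w₁`: for every non-increasing `H`,
`∫_0^∞ H(s) w₁(s) ds ≤ K ∫_0^∞ H(2s) w₁(s) ds` if `W(2t) ≤ K W(t)`, by the layer cake formula,
because the level sets of `H` are initial intervals (`lintegral_le_mul_lintegral_comp_two_mul`).
With `H(s) = h(max(s, 2t))`, and `h(2s) ≤ g*(s) ^ p₁` for `s > t`, this yields
`B(t) ≤ 2 K h(t) W(t) + K A(t)`. -/

open MeasureTheory Set Filter Topology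
open scoped ENNReal

noncomputable section

/-- Doubling of the primitive of `w` on initial intervals extends to all lower sets: dilating by `2`
loses at most the factor `K`. -/
lemma measure_lowerSet_le (w : ℝ → ℝ≥0∞) (K : ℝ≥0∞) (hK : 1 ≤ K)
    (hW : ∀ t > 0, ∫⁻ s in Ioc (0 : ℝ) (2 * t), w s ≤ K * ∫⁻ s in Ioc (0 : ℝ) t, w s)
    (L : Set ℝ) (hL : IsLowerSet L) (hLm : MeasurableSet L) :
    ((volume.restrict (Ioi 0)).withDensity w) L ≤
      K * ((volume.restrict (Ioi 0)).withDensity w) ((fun s => 2 * s) ⁻¹' L) := by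
  set ν := (volume.restrict (Ioi (0 : ℝ))).withDensity w with hν
  have hIic : ∀ a, ν (Iic a) = ∫⁻ s in Ioc (0 : ℝ) a, w s := by
    intro a
    rw [hν, withDensity_apply _ measurableSet_Iic, Measure.restrict_restrict measurableSet_Iic,
      inter_comm, Ioi_inter_Iic]
  rcases L.eq_empty_or_nonempty with rfl | hne
  · simp
  by_cases hb : BddAbove L
  · set a := sSup L
    have h1 : L ⊆ Iic a := fun x hx => le_csSup hb hx
    have h2 : Iio (a / 2) ⊆ (fun s => 2 * s) ⁻¹' L := by
      intro x hx
      obtain ⟨y, hy, hxy⟩ := exists_lt_of_lt_csSup hne (show 2 * x < a by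
        have : x < a / 2 := hx
        linarith)
      exact hL hxy.le hy
    rcases le_or_gt a 0 with ha | ha
    · have : ν L ≤ 0 := (measure_mono h1).trans (by rw [hIic, Ioc_eq_empty (not_lt.2 ha)]; simp)
      exact this.trans zero_le
    · calc ν L ≤ ν (Iic a) := measure_mono h1
        _ ≤ K * ∫⁻ s in Ioc (0 : ℝ) (a / 2), w s := by
            rw [hIic]
            have := hW (a / 2) (by positivity)
            rwa [mul_div_cancel₀ a two_ne_zero] at this
        _ = K * ν (Iio (a / 2)) := by
            rw [← hIic]
            congr 1
            have hac : ν ≪ volume := (withDensity_absolutelyContinuous _ _).trans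
              Measure.absolutelyContinuous_restrict
            exact measure_congr (hac.ae_eq Iio_ae_eq_Iic).symm
        _ ≤ _ := by gcongr
  · have : L = univ := by
      refine eq_univ_of_forall fun x => ?_
      obtain ⟨y, hy, hxy⟩ := not_bddAbove_iff.1 hb x
      exact hL hxy.le hy
    subst this
    simpa using mul_le_mul_left hK (ν univ)

/-- A doubling weight may be dilated against any non-increasing function. -/
lemma lintegral_le_mul_lintegral_comp_two_mul (w : ℝ → ℝ≥0∞) (hw : Measurable w)
    (K : ℝ≥0∞) (hK : 1 ≤ K)
    (hW : ∀ t > 0, ∫⁻ s in Ioc (0 : ℝ) (2 * t), w s ≤ K * ∫⁻ s in Ioc (0 : ℝ) t, w s)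
    (H : ℝ → ℝ≥0∞) (hH : Antitone H) (hfin : ∀ s, H s ≠ ∞) :
    ∫⁻ s in Ioi (0 : ℝ), H s * w s ≤ K * ∫⁻ s in Ioi (0 : ℝ), H (2 * s) * w s := by
  set ν := (volume.restrict (Ioi (0 : ℝ))).withDensity w with hν
  have hm : Measurable H := hH.measurable
  have h2 : Measurable fun s : ℝ => 2 * s := measurable_const_mul 2
  have e1 : ∫⁻ s in Ioi (0 : ℝ), H s * w s = ∫⁻ s, H s ∂ν := by
    rw [hν, lintegral_withDensity_eq_lintegral_mul _ hw hm]
    simp [mul_comm]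
  have e2 : ∫⁻ s in Ioi (0 : ℝ), H (2 * s) * w s = ∫⁻ s, H (2 * s) ∂ν := by
    rw [hν, lintegral_withDensity_eq_lintegral_mul _ hw (show Measurable fun s : ℝ => H (2 * s) from hm.comp h2)]
    simp [mul_comm]
  have hr : Antitone fun s => (H s).toReal := fun a b hab => ENNReal.toReal_mono (hfin _) (hH hab)
  have lc : ∀ f : ℝ → ℝ, Measurable f → ∫⁻ s, H (f s) ∂ν =
      ∫⁻ l in Ioi (0 : ℝ), ν {s | l < (H (f s)).toReal} := by
    intro f hf
    rw [← lintegral_eq_lintegral_meas_lt ν (Eventually.of_forall fun s => ENNReal.toReal_nonneg)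
      (show Measurable fun s => (H (f s)).toReal from (hm.comp hf).ennreal_toReal).aemeasurable]
    exact lintegral_congr fun s => (ENNReal.ofReal_toReal (hfin _)).symm
  have hanti : Antitone fun l => ν {s | l < (H (2 * s)).toReal} :=
    fun a b hab => measure_mono fun s (hs : b < _) => hab.trans_lt hs
  rw [e1, e2, lc (fun s => s) measurable_id, lc _ h2, ← lintegral_const_mul _ hanti.measurable]
  refine lintegral_mono fun l => ?_
  exact measure_lowerSet_le w K hK hW {s | l < (H s).toReal}
    (fun a b hab (ha : l < _) => ha.trans_le (hr hab))
    (measurableSet_lt measurable_const hr.measurable)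

/-- The set where the function exceeds `(φ (t + s))⁻¹` lies in `(t, t + s]`. -/
lemma rearrL_le (φ : ℝ → ℝ≥0∞) (hφ : MonotoneOn φ (Ioi 0)) (t s : ℝ) (ht : 0 < t) (hs : 0 < s) :
    rearrL ((Ioi t).indicator fun s => (φ s)⁻¹) s ≤ (φ (t + s))⁻¹ := by
  refine sInf_le ?_
  have hsub : {x | (φ (t + s))⁻¹ < (Ioi t).indicator (fun s => (φ s)⁻¹) x} ⊆ Ioc t (t + s) := by
    intro x hx
    by_cases hxt : x ∈ Ioi t
    · refine ⟨hxt, le_of_not_gt fun hlt => ?_⟩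
      rw [mem_ofPred_eq, indicator_of_mem hxt, ENNReal.inv_lt_inv] at hx
      exact absurd (hφ (show 0 < t + s by linarith) (show 0 < x by linarith) hlt.le) (not_le.2 hx)
    · rw [mem_ofPred_eq, indicator_of_notMem hxt] at hx
      simp at hx
  calc (volume.restrict (Ioi 0)) _ ≤ volume (Ioc t (t + s)) :=
        (Measure.restrict_apply_le _ _).trans (measure_mono hsub)
    _ = ENNReal.ofReal s := by simp

/-- The function is at least `(φ x)⁻¹` on `(t, x]`, a set of measure larger than `s`. -/
lemma le_rearrL (φ : ℝ → ℝ≥0∞) (hφ : MonotoneOn φ (Ioi 0)) (t s x : ℝ) (ht : 0 < t) (hs : 0 < s)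
    (hx : t + s < x) :
    (φ x)⁻¹ ≤ rearrL ((Ioi t).indicator fun s => (φ s)⁻¹) s := by
  refine le_sInf fun l hl => le_of_not_gt fun hlt => ?_
  have hsub : Ioc t x ⊆ {y | l < (Ioi t).indicator (fun s => (φ s)⁻¹) y} := by
    intro y hy
    rw [mem_ofPred_eq, indicator_of_mem (show y ∈ Ioi t from hy.1)]
    refine hlt.trans_le (ENNReal.inv_le_inv.2 (hφ ?_ ?_ hy.2))
    · exact ht.trans hy.1
    · show 0 < x
      linarith
  have h1 : ENNReal.ofReal (x - t) ≤ ENNReal.ofReal s := by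
    calc ENNReal.ofReal (x - t) = (volume.restrict (Ioi 0)) (Ioc t x) := by
          have hpos : Ioc t x ⊆ Ioi 0 := fun y hy => ht.trans hy.1
          rw [Measure.restrict_eq_self _ hpos, Real.volume_Ioc]
      _ ≤ _ := (measure_mono hsub).trans hl
  rw [ENNReal.ofReal_le_ofReal_iff hs.le] at h1
  linarith

/-- Passage from the quasinorm form of a uniform bound to its `p`-th power form. -/
lemma forall_mul_rpow_bound_iff (p : ℝ) (hp : 0 < p) (σ X : ℝ → ℝ≥0∞) :
    (∃ C > 0, ∀ t > 0, σ t * X t ^ (1 / p) ≤ ENNReal.ofReal C) ↔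
      ∃ M : ℝ≥0∞, M ≠ ∞ ∧ ∀ t > 0, σ t ^ p * X t ≤ M := by
  have e : ∀ t, σ t * X t ^ (1 / p) = (σ t ^ p * X t) ^ (1 / p) := by
    intro t
    rw [ENNReal.mul_rpow_of_nonneg _ _ (by positivity), ← ENNReal.rpow_mul,
      mul_one_div_cancel hp.ne', ENNReal.rpow_one]
  simp only [e]
  constructor
  · rintro ⟨C, -, h⟩
    refine ⟨ENNReal.ofReal C ^ p, ENNReal.rpow_ne_top_of_nonneg hp.le ENNReal.ofReal_ne_top,
      fun t ht => ?_⟩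
    rw [← ENNReal.rpow_inv_le_iff hp, ← one_div]
    exact h t ht
  · rintro ⟨M, hM, h⟩
    have hM' : M ^ (1 / p) ≠ ∞ := ENNReal.rpow_ne_top_of_nonneg (by positivity) hM
    -- adding `1` makes the constant positive even if `M = 0`
    refine ⟨(M ^ (1 / p)).toReal + 1, by positivity, fun t ht => ?_⟩
    calc (σ t ^ p * X t) ^ (1 / p) ≤ M ^ (1 / p) :=
          ENNReal.rpow_le_rpow (h t ht) (by positivity)
      _ = ENNReal.ofReal (M ^ (1 / p)).toReal := (ENNReal.ofReal_toReal hM').symm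
      _ ≤ _ := ENNReal.ofReal_le_ofReal (by linarith)

/-- Lemma 3.4: equivalence of the shifted condition with its integral form,
for a couple of `Λ`-type spaces. -/
theorem lambda_condition_equivalence
    (p₀ p₁ : ℝ) (hp₀ : 0 < p₀) (hp₁ : 0 < p₁)
    (w₀ w₁ : ℝ → ℝ≥0∞) (hw₀ : Measurable w₀) (hw₁ : Measurable w₁)
    (φ₀ φ₁ σ : ℝ → ℝ≥0∞)
    (hφ₀def : ∀ t > 0, φ₀ t = (∫⁻ s in Ioc (0 : ℝ) t, w₀ s) ^ (1 / p₀))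
    (hφ₁def : ∀ t > 0, φ₁ t = (∫⁻ s in Ioc (0 : ℝ) t, w₁ s) ^ (1 / p₁))
    (hφ₀ : ∀ t > 0, φ₀ t ≠ 0 ∧ φ₀ t ≠ ∞)
    (hφ₁ : ∀ t > 0, φ₁ t ≠ 0 ∧ φ₁ t ≠ ∞)
    (hσdef : ∀ t > 0, σ t = φ₀ t / φ₁ t)
    (CΔ : ℝ) (hCΔ : 0 < CΔ)
    (hΔ₂ : ∀ t > 0, φ₁ (2 * t) ≤ ENNReal.ofReal CΔ * φ₁ t) :
    (∃ C₁ > 0, ∀ t > 0,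
        σ t * LambdaNormE p₁ w₁ ((Ioi t).indicator fun s => (φ₀ s)⁻¹)
          ≤ ENNReal.ofReal C₁) ↔
    (∃ C₂ > 0, ∀ t > 0,
        σ t * (∫⁻ s in Ioi t, φ₀ s ^ (-p₁) * w₁ s) ^ (1 / p₁)
          ≤ ENNReal.ofReal C₂) := by
  have hmono : MonotoneOn φ₀ (Ioi 0) := by
    intro a ha b hb hab
    rw [hφ₀def a ha, hφ₀def b hb]
    exact ENNReal.rpow_le_rpow (lintegral_mono_set (Ioc_subset_Ioc_right hab)) (by positivity)
  set h : ℝ → ℝ≥0∞ := fun s => φ₀ s ^ (-p₁) with hh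
  have hinv : ∀ s, h s = (φ₀ s)⁻¹ ^ p₁ := fun s => by
    rw [ENNReal.inv_rpow, ← ENNReal.rpow_neg]
  have hanti : AntitoneOn h (Ioi 0) := by
    intro a ha b hb hab
    rw [hinv, hinv]
    exact ENNReal.rpow_le_rpow (ENNReal.inv_le_inv.2 (hmono ha hb hab)) hp₁.le
  have hhfin : ∀ s > 0, h s ≠ ∞ := by
    intro s hs
    rw [hinv]
    exact ENNReal.rpow_ne_top_of_nonneg hp₁.le (ENNReal.inv_ne_top.2 (hφ₀ s hs).1)
  set W : ℝ → ℝ≥0∞ := fun t => ∫⁻ s in Ioc (0 : ℝ) t, w₁ s with hWdef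
  have hW : ∀ t > 0, W t = φ₁ t ^ p₁ := by
    intro t ht
    rw [hφ₁def t ht, ← ENNReal.rpow_mul, one_div_mul_cancel hp₁.ne', ENNReal.rpow_one]
  have hσ : ∀ t > 0, σ t ^ p₁ * (h t * W t) = 1 := by
    intro t ht
    rw [hW t ht, hinv, ← ENNReal.mul_rpow_of_nonneg _ _ hp₁.le,
      ← ENNReal.mul_rpow_of_nonneg _ _ hp₁.le, hσdef t ht, ENNReal.div_eq_inv_mul]
    have e : (φ₁ t)⁻¹ * φ₀ t * ((φ₀ t)⁻¹ * φ₁ t)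
        = ((φ₁ t)⁻¹ * φ₁ t) * (φ₀ t * (φ₀ t)⁻¹) := by ring
    rw [e, ENNReal.inv_mul_cancel (hφ₁ t ht).1 (hφ₁ t ht).2,
      ENNReal.mul_inv_cancel (hφ₀ t ht).1 (hφ₀ t ht).2]
    simp
  have hconst : ∀ a > 0, ∀ c : ℝ≥0∞, ∫⁻ s in Ioc (0 : ℝ) a, c * w₁ s = c * W a :=
    fun a _ c => lintegral_const_mul _ hw₁
  unfold LambdaNormE
  rw [forall_mul_rpow_bound_iff p₁ hp₁ σ
      (fun t => ∫⁻ s in Ioi (0 : ℝ), rearrL ((Ioi t).indicator fun s => (φ₀ s)⁻¹) s ^ p₁ * w₁ s),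
    forall_mul_rpow_bound_iff p₁ hp₁ σ (fun t => ∫⁻ s in Ioi t, h s * w₁ s)]
  constructor
  · rintro ⟨M, hM, hA⟩
    set K : ℝ≥0∞ := max 1 (ENNReal.ofReal CΔ) ^ p₁ with hKdef
    have hKfin : K ≠ ∞ := ENNReal.rpow_ne_top_of_nonneg hp₁.le (by simp)
    have hK1 : 1 ≤ K := by
      rw [← ENNReal.one_rpow p₁]
      exact ENNReal.rpow_le_rpow (le_max_left _ _) hp₁.le
    have hWK : ∀ t > 0, W (2 * t) ≤ K * W t := by
      intro t ht
      rw [hW t ht, hW _ (by linarith), ← ENNReal.mul_rpow_of_nonneg _ _ hp₁.le]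
      refine ENNReal.rpow_le_rpow ((hΔ₂ t ht).trans ?_) hp₁.le
      gcongr
      exact le_max_right _ _
    refine ⟨2 * K + K * M, by finiteness, fun t ht => ?_⟩
    set A := ∫⁻ s in Ioi (0 : ℝ),
      rearrL ((Ioi t).indicator fun s => (φ₀ s)⁻¹) s ^ p₁ * w₁ s with hAdef
    -- freezing `h` on `(0, 2t]` gives a function that is non-increasing on the whole line
    set H : ℝ → ℝ≥0∞ := fun s => h (max s (2 * t)) with hHdef
    have hpos : ∀ s, 0 < max s (2 * t) := fun s => lt_max_of_lt_right (by linarith)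
    have hHanti : Antitone H := fun a b hab =>
      hanti (hpos a) (hpos b) (max_le_max_right _ hab)
    have hdil := lintegral_le_mul_lintegral_comp_two_mul w₁ hw₁ K hK1 hWK H hHanti
      fun s => hhfin _ (hpos s)
    have hR : ∫⁻ s in Ioi (0 : ℝ), H (2 * s) * w₁ s ≤ h t * W t + A := by
      rw [← Ioc_union_Ioi_eq_Ioi ht.le]
      refine (lintegral_union_le _ _ _).trans (add_le_add ?_ ?_)
      · rw [← hconst t ht]
        refine lintegral_mono fun s => ?_
        gcongr
        exact hanti ht (hpos _) (le_max_of_le_right (by linarith))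
      · refine le_trans ?_ (lintegral_mono_set (Ioi_subset_Ioi ht.le))
        refine setLIntegral_mono' measurableSet_Ioi fun s hs => ?_
        have hs : t < s := hs
        gcongr
        have e : H (2 * s) = (φ₀ (2 * s))⁻¹ ^ p₁ := by
          rw [← hinv, hHdef]
          simp only
          rw [max_eq_left (by linarith)]
        rw [e]
        exact ENNReal.rpow_le_rpow
          (le_rearrL φ₀ hmono t s _ ht (ht.trans hs) (by linarith)) hp₁.le
    have hB : ∫⁻ s in Ioi t, h s * w₁ s ≤
        h t * W (2 * t) + ∫⁻ s in Ioi (0 : ℝ), H s * w₁ s := by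
      rw [← Ioc_union_Ioi_eq_Ioi (show t ≤ 2 * t by linarith)]
      refine (lintegral_union_le _ _ _).trans (add_le_add ?_ ?_)
      · rw [← hconst (2 * t) (by linarith)]
        refine le_trans ?_ (lintegral_mono_set (Ioc_subset_Ioc_left ht.le))
        refine setLIntegral_mono' measurableSet_Ioc fun s hs => ?_
        gcongr
        exact hanti ht (ht.trans hs.1) hs.1.le
      · refine le_trans ?_ (lintegral_mono_set (Ioi_subset_Ioi (show 0 ≤ 2 * t by linarith)))
        refine setLIntegral_mono' measurableSet_Ioi fun s hs => ?_
        have hs : 2 * t < s := hs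
        have e : H s = h s := by
          rw [hHdef]
          simp only
          rw [max_eq_left hs.le]
        rw [e]
    calc σ t ^ p₁ * ∫⁻ s in Ioi t, h s * w₁ s
        ≤ σ t ^ p₁ * (h t * (K * W t) + K * (h t * W t + A)) := by
          gcongr
          refine hB.trans (add_le_add ?_ (hdil.trans ?_))
          · gcongr
            exact hWK t ht
          · gcongr
      _ = 2 * K * (σ t ^ p₁ * (h t * W t)) + K * (σ t ^ p₁ * A) := by ring
      _ ≤ 2 * K + K * M := by
          rw [hσ t ht, mul_one]
          gcongr
          exact hA t ht
  · rintro ⟨M, hM, hB⟩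
    refine ⟨1 + M, by finiteness, fun t ht => ?_⟩
    calc σ t ^ p₁ * ∫⁻ s in Ioi (0 : ℝ),
          rearrL ((Ioi t).indicator fun s => (φ₀ s)⁻¹) s ^ p₁ * w₁ s
        ≤ σ t ^ p₁ * (h t * W t + ∫⁻ s in Ioi t, h s * w₁ s) := by
          have hle : ∀ s > 0, ∀ x > 0, x ≤ t + s →
              rearrL ((Ioi t).indicator fun s => (φ₀ s)⁻¹) s ^ p₁ ≤ h x := by
            intro s hs x hx hxs
            rw [hinv]
            refine ENNReal.rpow_le_rpow ((rearrL_le φ₀ hmono t s ht hs).trans ?_) hp₁.le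
            exact ENNReal.inv_le_inv.2 (hmono hx (show 0 < t + s by linarith) hxs)
          gcongr
          rw [← Ioc_union_Ioi_eq_Ioi ht.le]
          refine (lintegral_union_le _ _ _).trans (add_le_add ?_ ?_)
          · rw [← hconst t ht]
            refine setLIntegral_mono' measurableSet_Ioc fun s hs => ?_
            gcongr
            exact hle s hs.1 t ht (by linarith [hs.1])
          · refine setLIntegral_mono' measurableSet_Ioi fun s hs => ?_
            have hs : t < s := hs
            gcongr
            exact hle s (ht.trans hs) s (ht.trans hs) (by linarith)
      _ ≤ 1 + M := by
          rw [mul_add, hσ t ht]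
          gcongr
          exact hB t ht

end
end

section
/- Let p0, p1 ∈ (0,∞) and let w0, w1 be weights on (0,∞). Let u : (0,∞) → [0,∞) be nonnegative, non-increasing, locally integrable and satisfy lim_{t→∞} u(t) = 0. Then for every t > 0: inf{‖u0‖_{S^{p0}(w0)} + t·‖u1‖_{S^{p1}(w1)} : u = u0 + u1, u0, u1 nonnegative and non-increasing on (0,∞)} = inf{‖v0‖_{Λ^{p0}(w̃0)} + t·‖v1‖_{Λ^{p1}(w̃1)} : Tu = v0 + v1, v0, v1 nonnegative and non-increasing on (0,∞)}, where w̃_i(t) = t^{p_i−2} w_i(1/t) and all functions are regarded as functions on (0,∞) with Lebesgue measure. -/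
/-!
Decompositions of `u` and of `Tu` correspond to each other under `T`. Let `A` be the class of
nonnegative, non-increasing, locally integrable functions on `(0,∞)` vanishing at infinity.

* `T` is additive and maps `A` into itself. Since `s ↦ s ∫_0^{1/s} g` is a primitive of `Tg` off a
  countable set and tends to `0` at `0`, one has `∫_0^b Tg = b ∫_0^{1/b} g`; this gives both the
  local integrability of `Tg` and the pointwise identity `T (T g) = g` (`InA.T_T`).
* A non-increasing function equals its rearrangement almost everywhere, so that
  `g** (t) - g* (t) = (1/t) Tg(1/t)` for almost every `t`. The substitution `t = 1/s` then gives
  `‖g‖_{S^p(w)} = ‖Tg‖_{Λ^p(w̃)}` for `g` in `A` (`InA.SNormL_eq`).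

The two terms of a monotone decomposition of a function of `A` are dominated by it, hence lie in
`A`, so each infimum is bounded by the other on applying `T` to both terms.
-/


open MeasureTheory Set Filter Topology
open scoped ENNReal

noncomputable section

/-- The quasinorm of `S^p(w)` for functions on `(0,∞)` (rearrangements taken with respect to
Lebesgue measure on `(0,∞)`). -/
def SNormL (p : ℝ) (w : ℝ → ℝ≥0∞) (u : ℝ → ℝ) : ℝ≥0∞ :=
  SNorm (volume.restrict (Ioi (0 : ℝ))) p w u

/-- The quasinorm of `Λ^p(w)` for functions on `(0,∞)`. -/
def LambdaNormL (p : ℝ) (w : ℝ → ℝ≥0∞) (u : ℝ → ℝ) : ℝ≥0∞ :=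
  LambdaNorm (volume.restrict (Ioi (0 : ℝ))) p w u

/-- The operator `T` acting on real-valued functions. -/
def TopR (g : ℝ → ℝ) (t : ℝ) : ℝ :=
  (∫ s in (0 : ℝ)..(1 / t), g s) - (1 / t) * g (1 / t)

/-- The class `A` of nonnegative, non-increasing, locally integrable functions on `(0,∞)` that tend
to `0` at infinity. -/
structure InA (g : ℝ → ℝ) : Prop where
  nonneg : ∀ s ∈ Ioi (0 : ℝ), 0 ≤ g s
  anti : AntitoneOn g (Ioi (0 : ℝ))
  loc : ∀ a > 0, IntegrableOn g (Ioc (0 : ℝ) a) volume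
  lim : Tendsto g atTop (𝓝 0)

/-! ### Monotone functions on the half-line -/

lemma countable_disc {g : ℝ → ℝ} (hg : AntitoneOn g (Ioi (0 : ℝ))) :
    {x | x ∈ Ioi (0 : ℝ) ∧ ¬ ContinuousAt g x}.Countable := by
  refine hg.countable_not_continuousWithinAt.mono ?_
  rintro x ⟨hx, hc⟩
  exact ⟨hx, fun h => hc (h.continuousAt (Ioi_mem_nhds hx))⟩

lemma ae_continuousAt {g : ℝ → ℝ} (hg : AntitoneOn g (Ioi (0 : ℝ))) :
    ∀ᵐ x ∂(volume.restrict (Ioi (0 : ℝ))), ContinuousAt g x := by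
  rw [ae_restrict_iff' measurableSet_Ioi]
  have := (countable_disc hg).ae_notMem volume
  filter_upwards [this] with x hx h0
  by_contra hc
  exact hx ⟨h0, hc⟩

/-- At a continuity point, a nonnegative non-increasing function is its own rearrangement. -/
lemma rearr_eq {g : ℝ → ℝ} (hnn : ∀ s ∈ Ioi (0 : ℝ), 0 ≤ g s) (hg : AntitoneOn g (Ioi (0 : ℝ)))
    {t : ℝ} (ht : 0 < t) (hc : ContinuousAt g t) :
    rearrR (volume.restrict (Ioi (0 : ℝ))) g t = ENNReal.ofReal (g t) := by
  unfold rearrR rearr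
  apply le_antisymm
  · apply sInf_le
    show (volume.restrict (Ioi (0 : ℝ))) _ ≤ _
    rw [Measure.restrict_apply' measurableSet_Ioi]
    have hsub : {x | ENNReal.ofReal (g t) < ENNReal.ofReal |g x|} ∩ Ioi 0 ⊆ Ioc 0 t := by
      rintro x ⟨hx, hx0⟩
      refine ⟨hx0, ?_⟩
      by_contra h
      have h1 := hg ht hx0 (not_le.1 h).le
      simp only [mem_ofPred_eq, abs_of_nonneg (hnn x hx0)] at hx
      exact absurd hx (not_lt.2 (ENNReal.ofReal_le_ofReal h1))
    refine (measure_mono hsub).trans ?_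
    simp
  · apply le_sInf
    intro l hl
    by_contra hlt
    rw [not_le] at hlt
    have hcc : ContinuousAt (fun x => ENNReal.ofReal (g x)) t :=
      ENNReal.continuous_ofReal.continuousAt.comp hc
    have hev : ∀ᶠ x in 𝓝 t, l < ENNReal.ofReal (g x) := hcc.eventually (lt_mem_nhds hlt)
    obtain ⟨y, hy, hyt⟩ : ∃ y, l < ENNReal.ofReal (g y) ∧ t < y :=
      ((hev.filter_mono nhdsWithin_le_nhds).and (self_mem_nhdsWithin (s := Ioi t))).exists
    have hl' : (volume.restrict (Ioi (0 : ℝ))) {x | l < ENNReal.ofReal |g x|}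
        ≤ ENNReal.ofReal t := hl
    rw [Measure.restrict_apply' measurableSet_Ioi] at hl'
    have hsub : Ioc 0 y ⊆ {x | l < ENNReal.ofReal |g x|} ∩ Ioi 0 := by
      rintro x ⟨hx0, hxy⟩
      refine ⟨?_, hx0⟩
      simp only [mem_ofPred_eq, abs_of_nonneg (hnn x hx0)]
      exact hy.trans_le (ENNReal.ofReal_le_ofReal (hg hx0 (lt_trans ht hyt) hxy))
    have := (measure_mono hsub).trans hl'
    rw [Real.volume_Ioc, sub_zero, ENNReal.ofReal_le_ofReal_iff ht.le] at this
    linarith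

lemma rearr_ae {g : ℝ → ℝ} (hnn : ∀ s ∈ Ioi (0 : ℝ), 0 ≤ g s) (hg : AntitoneOn g (Ioi (0 : ℝ))) :
    ∀ᵐ t ∂(volume.restrict (Ioi (0 : ℝ))),
      rearrR (volume.restrict (Ioi (0 : ℝ))) g t = ENNReal.ofReal (g t) := by
  filter_upwards [ae_continuousAt hg, ae_restrict_mem measurableSet_Ioi] with t hc ht
  exact rearr_eq hnn hg ht hc

lemma LambdaNormL_eq {g : ℝ → ℝ} (hnn : ∀ s ∈ Ioi (0 : ℝ), 0 ≤ g s)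
    (hg : AntitoneOn g (Ioi (0 : ℝ))) (p : ℝ) (w : ℝ → ℝ≥0∞) :
    LambdaNormL p w g = (∫⁻ t in Ioi (0 : ℝ), ENNReal.ofReal (g t) ^ p * w t) ^ (1 / p) := by
  unfold LambdaNormL LambdaNorm
  congr 1
  apply lintegral_congr_ae
  filter_upwards [rearr_ae hnn hg] with t ht
  rw [ht]

lemma InA.of_le {g v : ℝ → ℝ} (hg : InA g) (hnn : ∀ s ∈ Ioi (0 : ℝ), 0 ≤ v s)
    (hv : AntitoneOn v (Ioi (0 : ℝ))) (hle : ∀ s ∈ Ioi (0 : ℝ), v s ≤ g s) : InA v where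
  nonneg := hnn
  anti := hv
  loc a ha := by
    refine Integrable.mono' (hg.loc a ha) ?_ ?_
    · exact (aemeasurable_restrict_of_antitoneOn measurableSet_Ioc
        (hv.mono Ioc_subset_Ioi_self)).aestronglyMeasurable
    · filter_upwards [ae_restrict_mem measurableSet_Ioc] with x hx
      rw [Real.norm_of_nonneg (hnn x hx.1)]
      exact hle x hx.1
  lim := by
    refine squeeze_zero' ?_ ?_ hg.lim
    · filter_upwards [eventually_gt_atTop 0] with x hx using hnn x hx
    · filter_upwards [eventually_gt_atTop 0] with x hx using hle x hx

/-! ### The operator `T` on the class `A` -/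

lemma InA.ii {g : ℝ → ℝ} (hg : InA g) {a b : ℝ} (ha : 0 ≤ a) (hb : 0 ≤ b) :
    IntervalIntegrable g volume a b := by
  have h0 : ∀ c : ℝ, 0 ≤ c → IntervalIntegrable g volume 0 c := by
    intro c hc
    rcases hc.eq_or_lt with rfl | hc
    · simp
    · exact (intervalIntegrable_iff_integrableOn_Ioc_of_le hc.le).2 (hg.loc c hc)
  exact (h0 a ha).symm.trans (h0 b hb)

lemma InA.continuousOn_prim {g : ℝ → ℝ} (hg : InA g) {b : ℝ} (hb : 0 ≤ b) :
    ContinuousOn (fun r => ∫ s in (0 : ℝ)..r, g s) (Icc 0 b) := by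
  have := intervalIntegral.continuousOn_primitive_interval' (hg.ii le_rfl hb)
    (a := 0) left_mem_uIcc
  rwa [uIcc_of_le hb] at this

lemma InA.continuousAt_prim {g : ℝ → ℝ} (hg : InA g) {r : ℝ} (hr : 0 < r) :
    ContinuousAt (fun r => ∫ s in (0 : ℝ)..r, g s) r :=
  (hg.continuousOn_prim (b := r + 1) (by linarith)).continuousAt
    (Icc_mem_nhds hr (by linarith))

lemma InA.mul_le_integral {g : ℝ → ℝ} (hg : InA g) {a b : ℝ} (ha : 0 ≤ a) (hab : a ≤ b)
    (hb : 0 < b) : (b - a) * g b ≤ ∫ s in a..b, g s := by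
  have : ∫ _ in a..b, g b ≤ ∫ s in a..b, g s := by
    apply intervalIntegral.integral_mono_on_of_le_Ioo hab (by simp) (hg.ii ha hb.le)
    intro x hx
    exact hg.anti (lt_of_le_of_lt ha hx.1) hb hx.2.le
  simpa using this

lemma InA.T_nonneg {g : ℝ → ℝ} (hg : InA g) : ∀ s ∈ Ioi (0 : ℝ), 0 ≤ TopR g s := by
  intro s hs
  have h : 0 < 1 / s := one_div_pos.2 hs
  have := hg.mul_le_integral le_rfl h.le h
  unfold TopR
  linarith

lemma InA.T_anti {g : ℝ → ℝ} (hg : InA g) : AntitoneOn (TopR g) (Ioi (0 : ℝ)) := by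
  intro x hx y hy hxy
  have hx' : 0 < 1 / x := one_div_pos.2 hx
  have hy' : 0 < 1 / y := one_div_pos.2 hy
  have hle : 1 / y ≤ 1 / x := one_div_le_one_div_of_le hx hxy
  have h1 := hg.mul_le_integral hy'.le hle hx'
  have h2 := intervalIntegral.integral_add_adjacent_intervals
    (hg.ii le_rfl hy'.le) (hg.ii hy'.le hx'.le)
  have h3 := mul_le_mul_of_nonneg_left (hg.anti hy' hx' hle) hy'.le
  unfold TopR
  linarith

/-- Continuous Cesàro: the averages of a function of class `A` tend to `0`. -/
lemma InA.average_tendsto {g : ℝ → ℝ} (hg : InA g) :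
    Tendsto (fun r => r⁻¹ * ∫ s in (0 : ℝ)..r, g s) atTop (𝓝 0) := by
  rw [Metric.tendsto_nhds]
  intro ε hε
  obtain ⟨R, hR, hR0⟩ : ∃ R, g R < ε / 2 ∧ 0 < R :=
    ((hg.lim.eventually (gt_mem_nhds (half_pos hε))).and (eventually_gt_atTop 0)).exists
  have hl : Tendsto (fun r : ℝ => r⁻¹ * ∫ s in (0 : ℝ)..R, g s) atTop (𝓝 0) := by
    simpa using tendsto_inv_atTop_zero.mul_const (∫ s in (0 : ℝ)..R, g s)
  filter_upwards [hl.eventually (gt_mem_nhds (half_pos hε)), eventually_gt_atTop R] with r h1 hr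
  have hr0 : 0 < r := hR0.trans hr
  have hn : 0 ≤ ∫ s in (0 : ℝ)..r, g s :=
    (mul_nonneg (by linarith) (hg.nonneg r hr0)).trans (hg.mul_le_integral le_rfl hr0.le hr0)
  rw [Real.dist_eq, sub_zero, abs_of_nonneg (mul_nonneg (inv_nonneg.2 hr0.le) hn)]
  rw [← intervalIntegral.integral_add_adjacent_intervals
    (hg.ii le_rfl hR0.le) (hg.ii hR0.le hr0.le)]
  have h2 : ∫ s in R..r, g s ≤ ∫ _ in R..r, g R := by
    apply intervalIntegral.integral_mono_on hr.le (hg.ii hR0.le hr0.le) (by simp)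
    intro x hx
    exact hg.anti hR0 (hR0.trans_le hx.1) hx.1
  have h3 : r⁻¹ * ∫ s in R..r, g s ≤ ε / 2 := by
    rw [inv_mul_le_iff₀ hr0]
    simp only [intervalIntegral.integral_const, smul_eq_mul] at h2
    have := hg.nonneg R hR0
    nlinarith
  rw [mul_add]
  linarith

/-- The function `s ↦ s ∫_0^{1/s} g` is a primitive of `Tg`. -/
lemma InA.hasDerivAt {g : ℝ → ℝ} (hg : InA g) {s : ℝ} (hs : 0 < s) (hc : ContinuousAt g s⁻¹) :
    HasDerivAt (fun s => s * ∫ x in (0 : ℝ)..s⁻¹, g x) (TopR g s) s := by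
  have hs' : 0 < s⁻¹ := inv_pos.2 hs
  have hm : StronglyMeasurableAtFilter g (𝓝 s⁻¹) := by
    refine ⟨Ioi 0, Ioi_mem_nhds hs', ?_⟩
    exact (aemeasurable_restrict_of_antitoneOn measurableSet_Ioi hg.anti).aestronglyMeasurable
  have h1 := intervalIntegral.integral_hasDerivAt_right (hg.ii le_rfl hs'.le) hm hc
  have h2 := h1.comp s (hasDerivAt_inv hs.ne')
  have h3 := (hasDerivAt_id s).mul h2
  have h4 : 1 * ((fun u => ∫ x in (0 : ℝ)..u, g x) ∘ Inv.inv) s + id s * (g s⁻¹ * -(s ^ 2)⁻¹)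
      = TopR g s := by
    simp only [TopR, Function.comp, id, one_div]
    field_simp
    ring
  exact h4 ▸ h3

/-- Continuity at `0` is the vanishing of the averages of `g` at infinity: the value there is
`0 * 0`, by the convention `0⁻¹ = 0`. -/
lemma InA.continuousOn_avg {g : ℝ → ℝ} (hg : InA g) :
    ContinuousOn (fun s => s * ∫ x in (0 : ℝ)..s⁻¹, g x) (Ici 0) := by
  intro s hs
  rcases (mem_Ici.1 hs).eq_or_lt with rfl | hs
  · rw [← continuousWithinAt_Ioi_iff_Ici]
    have := hg.average_tendsto.comp tendsto_inv_nhdsGT_zero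
    simpa [ContinuousWithinAt, Function.comp_def] using this
  · refine ContinuousAt.continuousWithinAt ?_
    have h := hg.continuousAt_prim (inv_pos.2 hs)
    exact continuousAt_id.mul (ContinuousAt.comp (f := fun s : ℝ => s⁻¹)
      (g := fun r => ∫ s in (0 : ℝ)..r, g s) h (continuousAt_inv₀ hs.ne'))

lemma countable_disc_inv {g : ℝ → ℝ} (hg : AntitoneOn g (Ioi (0 : ℝ))) :
    {x : ℝ | x⁻¹ ∈ {x | x ∈ Ioi (0 : ℝ) ∧ ¬ ContinuousAt g x}}.Countable :=
  (countable_disc hg).preimage inv_injective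

lemma InA.integral_T_aux {g : ℝ → ℝ} (hg : InA g) {a b : ℝ} (ha : 0 ≤ a) (hab : a ≤ b)
    (hi : IntervalIntegrable (TopR g) volume a b) :
    ∫ s in a..b, TopR g s = b * (∫ x in (0 : ℝ)..b⁻¹, g x) - a * ∫ x in (0 : ℝ)..a⁻¹, g x := by
  refine integral_eq_of_hasDerivAt_off_countable_of_le
    (fun s => s * ∫ x in (0 : ℝ)..s⁻¹, g x) (TopR g) hab
    (countable_disc_inv hg.anti)
    (hg.continuousOn_avg.mono fun x hx => ha.trans hx.1) ?_ hi
  rintro x ⟨hx, hxc⟩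
  have hx0 : 0 < x := ha.trans_lt hx.1
  refine hg.hasDerivAt hx0 ?_
  by_contra hc
  exact hxc ⟨inv_pos.2 hx0, hc⟩

lemma InA.T_loc {g : ℝ → ℝ} (hg : InA g) (b : ℝ) (hb : 0 < b) :
    IntegrableOn (TopR g) (Ioc 0 b) volume := by
  have hii : ∀ a, 0 < a → a ≤ b → IntervalIntegrable (TopR g) volume a b := by
    intro a ha hab
    apply AntitoneOn.intervalIntegrable
    rw [uIcc_of_le hab]
    exact hg.T_anti.mono fun x hx => ha.trans_le hx.1
  have hseq : Tendsto (fun n : ℕ => b / ((n : ℝ) + 1)) atTop (𝓝 0) := by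
    simpa [div_eq_mul_inv] using (tendsto_one_div_add_atTop_nhds_zero_nat (𝕜 := ℝ)).const_mul b
  have hpos : ∀ n : ℕ, 0 < b / ((n : ℝ) + 1) := fun n => by positivity
  have hle : ∀ n : ℕ, b / ((n : ℝ) + 1) ≤ b := fun n =>
    div_le_self hb.le (by linarith [n.cast_nonneg (α := ℝ)])
  refine integrableOn_Ioc_of_intervalIntegral_norm_bounded_left (l := atTop)
    (a := fun n : ℕ => b / ((n : ℝ) + 1)) (I := b * ∫ x in (0 : ℝ)..b⁻¹, g x)
    (fun n => ?_) hseq ?_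
  · exact (intervalIntegrable_iff_integrableOn_Ioc_of_le (hle n)).1 (hii _ (hpos n) (hle n))
  · refine Eventually.of_forall fun n => ?_
    have h1 : ∫ x in Ioc (b / ((n : ℝ) + 1)) b, ‖TopR g x‖
        = ∫ x in (b / ((n : ℝ) + 1))..b, TopR g x := by
      rw [intervalIntegral.integral_of_le (hle n)]
      refine setIntegral_congr_fun measurableSet_Ioc fun x hx => ?_
      exact Real.norm_of_nonneg (hg.T_nonneg x ((hpos n).trans hx.1))
    rw [h1, hg.integral_T_aux (hpos n).le (hle n) (hii _ (hpos n) (hle n))]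
    have hp := inv_pos.2 (hpos n)
    have h2 := hg.mul_le_integral le_rfl hp.le hp
    have h3 := mul_nonneg (sub_nonneg.2 hp.le) (hg.nonneg _ hp)
    have h4 := mul_nonneg (hpos n).le (h3.trans h2)
    linarith

lemma InA.integral_T {g : ℝ → ℝ} (hg : InA g) {b : ℝ} (hb : 0 < b) :
    ∫ s in (0 : ℝ)..b, TopR g s = b * ∫ x in (0 : ℝ)..b⁻¹, g x := by
  rw [hg.integral_T_aux le_rfl hb.le
    ((intervalIntegrable_iff_integrableOn_Ioc_of_le hb.le).2 (hg.T_loc b hb))]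
  simp

/-- `T` is an involution on `A`, pointwise and not merely almost everywhere. -/
lemma InA.T_T {g : ℝ → ℝ} (hg : InA g) {t : ℝ} (ht : 0 < t) : TopR (TopR g) t = g t := by
  have h : (0 : ℝ) < 1 / t := one_div_pos.2 ht
  rw [TopR, hg.integral_T h]
  simp only [TopR, one_div, inv_inv]
  field_simp
  ring

lemma InA.T_mem {g : ℝ → ℝ} (hg : InA g) : InA (TopR g) where
  nonneg := hg.T_nonneg
  anti := hg.T_anti
  loc := hg.T_loc
  lim := by
    have h1 : Tendsto (fun r => ∫ s in (0 : ℝ)..r, g s) (𝓝[>] 0) (𝓝 0) := by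
      have h2 : Tendsto (fun r => ∫ s in (0 : ℝ)..r, g s) (𝓝[Icc 0 1] 0)
          (𝓝 (∫ s in (0 : ℝ)..0, g s)) :=
        hg.continuousOn_prim zero_le_one 0 (left_mem_Icc.2 zero_le_one)
      rw [intervalIntegral.integral_same] at h2
      refine h2.mono_left (nhdsWithin_le_iff.2 ?_)
      exact mem_of_superset (Ioc_mem_nhdsGT zero_lt_one) Ioc_subset_Icc_self
    refine squeeze_zero' ?_ ?_ (h1.comp tendsto_inv_atTop_nhdsGT_zero)
    · filter_upwards [eventually_gt_atTop 0] with x hx using hg.T_nonneg x hx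
    · filter_upwards [eventually_gt_atTop 0] with x hx
      have h : (0 : ℝ) < 1 / x := one_div_pos.2 hx
      have := mul_nonneg h.le (hg.nonneg _ h)
      simp only [TopR, Function.comp, one_div] at *
      linarith

lemma T_add {g g₀ g₁ : ℝ → ℝ} (h₀ : InA g₀) (h₁ : InA g₁)
    (h : ∀ s ∈ Ioi (0 : ℝ), g s = g₀ s + g₁ s) {t : ℝ} (ht : 0 < t) :
    TopR g t = TopR g₀ t + TopR g₁ t := by
  have hp : (0 : ℝ) < 1 / t := one_div_pos.2 ht
  have hi : ∫ s in (0 : ℝ)..(1 / t), g s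
      = (∫ s in (0 : ℝ)..(1 / t), g₀ s) + ∫ s in (0 : ℝ)..(1 / t), g₁ s := by
    rw [← intervalIntegral.integral_add (h₀.ii le_rfl hp.le) (h₁.ii le_rfl hp.le)]
    rw [intervalIntegral.integral_of_le hp.le, intervalIntegral.integral_of_le hp.le]
    exact setIntegral_congr_fun measurableSet_Ioc fun x hx => h x hx.1
  unfold TopR
  rw [hi, h _ hp]
  ring

/-! ### Isometry between `S^p(w)` and `Λ^p(w̃)` on the class `A` -/

lemma InA.osc_eq {g : ℝ → ℝ} (hg : InA g) {t : ℝ} (ht : 0 < t) (hc : ContinuousAt g t) :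
    oscR (volume.restrict (Ioi (0 : ℝ))) g t = ENNReal.ofReal (t⁻¹ * TopR g t⁻¹) := by
  have h1 : ∫⁻ s in Ioc (0 : ℝ) t, rearrR (volume.restrict (Ioi (0 : ℝ))) g s
      = ENNReal.ofReal (∫ s in (0 : ℝ)..t, g s) := by
    rw [intervalIntegral.integral_of_le ht.le, ofReal_integral_eq_lintegral_ofReal (hg.loc t ht)]
    · refine lintegral_congr_ae ?_
      exact ae_restrict_of_ae_restrict_of_subset Ioc_subset_Ioi_self (rearr_ae hg.nonneg hg.anti)
    · filter_upwards [ae_restrict_mem measurableSet_Ioc] with x hx using hg.nonneg x hx.1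
  unfold oscR dstarR
  rw [h1, rearr_eq hg.nonneg hg.anti ht hc, ← ENNReal.ofReal_mul (one_div_pos.2 ht).le,
    ← ENNReal.ofReal_sub _ (hg.nonneg t ht)]
  congr 1
  simp only [TopR, one_div, inv_inv]
  field_simp

/-- The substitution `t = 1/s` in the defining integral turns `w` into `w̃`. -/
lemma InA.SNormL_eq {g : ℝ → ℝ} (hg : InA g) (p : ℝ) (hp : 0 < p) (w : ℝ → ℝ≥0∞) :
    SNormL p w g = LambdaNormL p (tildeW p w) (TopR g) := by
  rw [LambdaNormL_eq hg.T_nonneg hg.T_anti]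
  unfold SNormL SNorm
  congr 1
  have h1 : ∫⁻ t in Ioi (0 : ℝ), oscR (volume.restrict (Ioi (0 : ℝ))) g t ^ p * w t
      = ∫⁻ t in Ioi (0 : ℝ), ENNReal.ofReal (t⁻¹ * TopR g t⁻¹) ^ p * w t := by
    apply lintegral_congr_ae
    filter_upwards [ae_continuousAt hg.anti, ae_restrict_mem measurableSet_Ioi] with t hc ht
    rw [hg.osc_eq ht hc]
  have himg : (fun x : ℝ => x⁻¹) '' Ioi 0 = Ioi 0 := by
    ext x
    constructor
    · rintro ⟨y, hy, rfl⟩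
      exact inv_pos.2 (mem_Ioi.1 hy)
    · intro hx
      exact ⟨x⁻¹, inv_pos.2 (mem_Ioi.1 hx), inv_inv x⟩
  have h2 := lintegral_image_eq_lintegral_abs_deriv_mul (s := Ioi (0 : ℝ)) measurableSet_Ioi
    (fun x hx => (hasDerivAt_inv (ne_of_gt (mem_Ioi.1 hx))).hasDerivWithinAt)
    inv_injective.injOn (fun t => ENNReal.ofReal (t⁻¹ * TopR g t⁻¹) ^ p * w t)
  rw [himg] at h2
  rw [h1, h2]
  refine setLIntegral_congr_fun measurableSet_Ioi fun s hs => ?_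
  have hs : 0 < s := hs
  have hs1 : ENNReal.ofReal s ≠ 0 := by simpa using hs
  simp only [inv_inv, tildeW, one_div]
  rw [ENNReal.ofReal_mul hs.le, ENNReal.mul_rpow_of_nonneg _ _ hp.le]
  have hd : ENNReal.ofReal |-(s ^ 2)⁻¹| = ENNReal.ofReal s ^ (-2 : ℝ) := by
    rw [abs_neg, abs_of_pos (by positivity), ENNReal.ofReal_rpow_of_pos hs, Real.rpow_neg hs.le]
    norm_num
  rw [hd, sub_eq_add_neg, ENNReal.rpow_add _ _ hs1 ENNReal.ofReal_ne_top]
  ring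

/-- The identity `K^d(u,t;S^{p₀}(w₀),S^{p₁}(w₁)) = K^d(Tu,t;Λ^{p₀}(w̃₀),Λ^{p₁}(w̃₁))`
for the restricted (monotone) `K`-functionals. -/
theorem Kd_S_eq_Kd_Lambda
    (p₀ p₁ : ℝ) (hp₀ : 0 < p₀) (hp₁ : 0 < p₁)
    (w₀ w₁ : ℝ → ℝ≥0∞) (hw₀ : Measurable w₀) (hw₁ : Measurable w₁)
    (u : ℝ → ℝ)
    (hnn : ∀ s ∈ Ioi (0 : ℝ), 0 ≤ u s)
    (hmono : AntitoneOn u (Ioi (0 : ℝ)))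
    (hloc : ∀ a > 0, IntegrableOn u (Ioc (0 : ℝ) a) volume)
    (hlim : Tendsto u atTop (𝓝 0))
    (t : ℝ) (ht : 0 < t) :
    (⨅ (u₀ : ℝ → ℝ) (u₁ : ℝ → ℝ)
      (_ : ∀ s ∈ Ioi (0 : ℝ), u s = u₀ s + u₁ s)
      (_ : ∀ s ∈ Ioi (0 : ℝ), 0 ≤ u₀ s) (_ : AntitoneOn u₀ (Ioi (0 : ℝ)))
      (_ : ∀ s ∈ Ioi (0 : ℝ), 0 ≤ u₁ s) (_ : AntitoneOn u₁ (Ioi (0 : ℝ))),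
      SNormL p₀ w₀ u₀ + ENNReal.ofReal t * SNormL p₁ w₁ u₁)
    =
    (⨅ (v₀ : ℝ → ℝ) (v₁ : ℝ → ℝ)
      (_ : ∀ s ∈ Ioi (0 : ℝ), TopR u s = v₀ s + v₁ s)
      (_ : ∀ s ∈ Ioi (0 : ℝ), 0 ≤ v₀ s) (_ : AntitoneOn v₀ (Ioi (0 : ℝ)))
      (_ : ∀ s ∈ Ioi (0 : ℝ), 0 ≤ v₁ s) (_ : AntitoneOn v₁ (Ioi (0 : ℝ))),
      LambdaNormL p₀ (tildeW p₀ w₀) v₀ + ENNReal.ofReal t * LambdaNormL p₁ (tildeW p₁ w₁) v₁) := by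
  have hu : InA u := ⟨hnn, hmono, hloc, hlim⟩
  apply le_antisymm
  · refine le_iInf fun v₀ => le_iInf fun v₁ => le_iInf fun h => le_iInf fun hn₀ =>
      le_iInf fun ha₀ => le_iInf fun hn₁ => le_iInf fun ha₁ => ?_
    have hv₀ : InA v₀ := hu.T_mem.of_le hn₀ ha₀ fun s hs => by linarith [h s hs, hn₁ s hs]
    have hv₁ : InA v₁ := hu.T_mem.of_le hn₁ ha₁ fun s hs => by linarith [h s hs, hn₀ s hs]
    refine iInf_le_of_le (TopR v₀) <| iInf_le_of_le (TopR v₁) <|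
      iInf_le_of_le (fun s hs => ?_) <| iInf_le_of_le hv₀.T_nonneg <| iInf_le_of_le hv₀.T_anti <|
      iInf_le_of_le hv₁.T_nonneg <| iInf_le_of_le hv₁.T_anti ?_
    · rw [← T_add hv₀ hv₁ h hs, hu.T_T hs]
    · have key : ∀ {v : ℝ → ℝ}, InA v → ∀ p, 0 < p → ∀ w : ℝ → ℝ≥0∞,
          SNormL p w (TopR v) = LambdaNormL p (tildeW p w) v := by
        intro v hv p hp w
        rw [hv.T_mem.SNormL_eq p hp w, LambdaNormL_eq hv.nonneg hv.anti,
          LambdaNormL_eq hv.T_mem.T_nonneg hv.T_mem.T_anti]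
        congr 1
        refine setLIntegral_congr_fun measurableSet_Ioi fun s hs => ?_
        simp only [hv.T_T (mem_Ioi.1 hs)]
      rw [key hv₀ p₀ hp₀, key hv₁ p₁ hp₁]
  · refine le_iInf fun v₀ => le_iInf fun v₁ => le_iInf fun h => le_iInf fun hn₀ =>
      le_iInf fun ha₀ => le_iInf fun hn₁ => le_iInf fun ha₁ => ?_
    have hv₀ : InA v₀ := hu.of_le hn₀ ha₀ fun s hs => by linarith [h s hs, hn₁ s hs]
    have hv₁ : InA v₁ := hu.of_le hn₁ ha₁ fun s hs => by linarith [h s hs, hn₀ s hs]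
    refine iInf_le_of_le (TopR v₀) <| iInf_le_of_le (TopR v₁) <|
      iInf_le_of_le (fun s hs => T_add hv₀ hv₁ h hs) <| iInf_le_of_le hv₀.T_nonneg <|
      iInf_le_of_le hv₀.T_anti <| iInf_le_of_le hv₁.T_nonneg <| iInf_le_of_le hv₁.T_anti ?_
    rw [hv₀.SNormL_eq p₀ hp₀, hv₁.SNormL_eq p₁ hp₁]

end
end
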